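/- Under the standing assumption P_π(A_1=0)=0 and P_π(B_1=0)<1, the following assertions are equivalent in the Markov-modulated setting: (a) Ψ_1∘…∘Ψ_n(0) converges a.s. to Z_∞=∑_{n≥1}Π_{n-1}B_n and Z_∞ is a proper random variable; (b) Π_{τ_n(i)}→0 a.s. and E_i J_i(log⁺ W^i)<∞ for some (equivalently, all) i∈S; (c) P_i(|Π_{τ(i)}|=1)<1 for some (equivalently, all) i∈S and limsup_{n→∞}|Π_{n-1}B_n|<∞ a.s.; (d) Π_{n-1}B_n→0 a.s.; (e) ∑_{n≥1}|Π_{n-1}B_n|<∞ a.s. Furthermore, Ψ_1∘…∘Ψ_n(Z_0) converges a.s. to a proper random variable for every admissible Z_0 if and only if Π_n→0 a.s. and E_i J_i(log⁺ W^i)<∞ for some (equivalently, all) i∈S; in that case the limit always equals Z_∞. -/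

import Mathlib

open MeasureTheory ProbabilityTheory Filter
open scoped ENNReal NNReal Topology

noncomputable section

namespace Perpetuities

/-- The positive part of the logarithm, with the convention `log⁺ 0 = 0`. -/
def logplus (x : ℝ) : ℝ := max (Real.log x) 0

/-- Weak convergence of a sequence of (probability) measures on `ℝ`. -/
def WeakLim (μ : ℕ → Measure ℝ) (ν : Measure ℝ) : Prop :=
  ∀ f : BoundedContinuousFunction ℝ ℝ,
    Tendsto (fun n => ∫ x, f x ∂ μ n) atTop (nhds (∫ x, f x ∂ ν))

/-- `|f n| → ∞` in `μ`-probability. -/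
def TendstoInfInMeasure {Ω : Type*} [MeasurableSpace Ω] (μ : Measure Ω) (f : ℕ → Ω → ℝ) : Prop :=
  ∀ x : ℝ, 0 < x → Tendsto (fun n => μ {ω | |f n ω| ≤ x}) atTop (nhds 0)

/-- `d` is the lattice span (period) of the distribution of the `ℕ`-valued random
variable `T` under `μ`, i.e. `d` is the greatest common divisor of the support. -/
def LatticeSpan {Ω : Type*} [MeasurableSpace Ω] (μ : Measure Ω) (T : Ω → ℕ) (d : ℕ) : Prop :=
  (∀ n, 0 < μ {ω | T ω = n} → d ∣ n) ∧ ∀ e : ℕ, (∀ n, 0 < μ {ω | T ω = n} → e ∣ n) → e ∣ d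

/-- The Markov-modulated setting: an ergodic (irreducible, aperiodic, positive recurrent)
Markov chain `M` on a countable state space `S` with transition matrix `p` and stationary
distribution `π`, modulating a sequence `(A_n, B_n)_{n ≥ 1}` of real random pairs (indexed
here so that `A n`, `B n` are the paper's `A_{n+1}`, `B_{n+1}`): conditionally on the whole
path of the chain, the pairs are independent and the conditional law of `(A_{n+1}, B_{n+1})`
given the path depends only on `(M_n, M_{n+1})`, via the stochastic kernel `K`.
`P i` is the underlying probability measure conditioned on `M 0 = i`. -/
structure MMSetting (S : Type*) (Ω : Type*) [MeasurableSpace S] [MeasurableSingletonClass S]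
    [Countable S] [MeasurableSpace Ω] where
  P : S → Measure Ω
  prob : ∀ i, IsProbabilityMeasure (P i)
  π : S → ℝ≥0∞
  πsum : ∑' i, π i = 1
  πpos : ∀ i, 0 < π i
  p : S → S → ℝ≥0∞
  psum : ∀ i, ∑' j, p i j = 1
  stationary : ∀ j, ∑' i, π i * p i j = π j
  K : S → S → Measure (ℝ × ℝ)
  Kprob : ∀ i j, IsProbabilityMeasure (K i j)
  M : ℕ → Ω → S
  A : ℕ → Ω → ℝ
  B : ℕ → Ω → ℝ
  measM : ∀ n, Measurable (M n)
  measA : ∀ n, Measurable (A n)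
  measB : ∀ n, Measurable (B n)
  start : ∀ i, P i {ω | M 0 ω = i} = 1
  chain : ∀ (i : S) (n : ℕ) (path : ℕ → S), path 0 = i →
    P i (⋂ k ∈ Finset.range (n + 1), {ω | M k ω = path k})
      = ∏ k ∈ Finset.range n, p (path k) (path (k + 1))
  modulated : ∀ (i : S) (n : ℕ) (path : ℕ → S) (E : ℕ → Set (ℝ × ℝ)), path 0 = i →
    (∀ k, MeasurableSet (E k)) →
    P i ((⋂ k ∈ Finset.range (n + 1), {ω | M k ω = path k}) ∩
        ⋂ k ∈ Finset.range n, {ω | (A k ω, B k ω) ∈ E k})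
      = P i (⋂ k ∈ Finset.range (n + 1), {ω | M k ω = path k})
        * ∏ k ∈ Finset.range n, K (path k) (path (k + 1)) (E k)
  irreducible : ∀ i j, ∃ n, 0 < P i {ω | M n ω = j}
  recurrent : ∀ i, P i {ω | ∃ n, 0 < n ∧ M n ω = i} = 1
  posRecurrent : ∀ i, ∫⁻ ω, ((sInf {n | 0 < n ∧ M n ω = i} : ℕ) : ℝ≥0∞) ∂ P i < ⊤
  aperiodic : ∀ (i : S) (d : ℕ), (∀ n, 0 < n → 0 < P i {ω | M n ω = i} → d ∣ n) → d = 1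

namespace MMSetting

variable {S : Type*} [MeasurableSpace S] [MeasurableSingletonClass S] [Countable S]
variable {Ω : Type*} [MeasurableSpace Ω]
variable (X : MMSetting S Ω)

/-- `Pπ = ∑ i, π i • P i`, the stationary (unconditional) probability measure. -/
def Pπ : Measure Ω := Measure.sum fun i => X.π i • X.P i

/-- `Pprod n = Π_n = A_1 ⋯ A_n`, with `Π_0 = 1`. -/
def Pprod (n : ℕ) (ω : Ω) : ℝ := ∏ k ∈ Finset.range n, X.A k ω

/-- `Ssum n = ∑_{k=1}^n Π_{k-1} B_k`, the value `Ψ_1 ∘ ⋯ ∘ Ψ_n (0)` of the backward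
iteration started at `0`. -/
def Ssum (n : ℕ) (ω : Ω) : ℝ := ∑ k ∈ Finset.range n, X.Pprod k ω * X.B k ω

/-- `Zb Z n = Ψ_1 ∘ ⋯ ∘ Ψ_n (Z) = Π_n Z + ∑_{k=1}^n Π_{k-1} B_k`, the backward iteration. -/
def Zb (Z : Ω → ℝ) (n : ℕ) (ω : Ω) : ℝ := X.Pprod n ω * Z ω + X.Ssum n ω

/-- `Zf Z n = Ψ_n ∘ ⋯ ∘ Ψ_1 (Z)`, the forward iteration. -/
def Zf (Z : Ω → ℝ) : ℕ → Ω → ℝ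
  | 0 => Z
  | n + 1 => fun ω => X.A n ω * Zf Z n ω + X.B n ω

/-- The perpetuity `Z_∞ = ∑_{n ≥ 1} Π_{n-1} B_n`. -/
def Zinf (ω : Ω) : ℝ := ∑' n, X.Pprod n ω * X.B n ω

/-- `tau i n = τ_n(i)`, the `n`-th return time of the driving chain to the state `i`
(`τ_0(i) = 0`). -/
def tau (i : S) : ℕ → Ω → ℕ
  | 0 => fun _ => 0
  | n + 1 => fun ω => sInf {k | tau i n ω < k ∧ X.M k ω = i}

/-- `A_1^i = Π_{τ(i)}`. -/
def Ai (i : S) (ω : Ω) : ℝ := X.Pprod (X.tau i 1 ω) ω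

/-- `B_1^i = ∑_{k=1}^{τ(i)} Π_{k-1} B_k`. -/
def Bi (i : S) (ω : Ω) : ℝ := X.Ssum (X.tau i 1 ω) ω

/-- `W^i = max_{1 ≤ k ≤ τ(i)} |Π_{k-1} B_k|`. -/
def Wi (i : S) (ω : Ω) : ℝ :=
  (((Finset.range (X.tau i 1 ω)).sup fun k => ‖X.Pprod k ω * X.B k ω‖₊ : ℝ≥0) : ℝ)

/-- `S_{τ(i)} = - log |Π_{τ(i)}|`. -/
def Stau (i : S) (ω : Ω) : ℝ := - Real.log |X.Ai i ω|

/-- The function `J_i`: `J_i(0) = 1`, and for `x > 0`, `J_i(x) = x / E_i (S_{τ(i)}⁺ ∧ x)`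
if `P_i(S_{τ(i)} ≤ 0) < 1`, and `J_i(x) = x` otherwise. -/
def Ji (i : S) (x : ℝ) : ℝ :=
  if x = 0 then 1
  else if X.P i {ω | X.Stau i ω ≤ 0} < 1 then
    x / ∫ ω, min (max (X.Stau i ω) 0) x ∂ X.P i
  else x

/-- `τ̂(i) = inf {k ≥ 1 : M_k = i, Π_k = 1}`. -/
def hatτ (i : S) (ω : Ω) : ℕ := sInf {k | 0 < k ∧ X.M k ω = i ∧ X.Pprod k ω = 1}

/-- `Z` is an admissible initial value: it is (conditionally on `M 0`, i.e. under each `P i`)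
independent of the modulated sequence `(M_n, A_n, B_n)_{n ≥ 1}`. -/
def Admissible (Z : Ω → ℝ) : Prop :=
  Measurable Z ∧
    ∀ i : S, IndepFun Z (fun ω => fun n : ℕ => (X.M (n + 1) ω, X.A n ω, X.B n ω)) (X.P i)

/-- The degeneracy condition: `A_1 c_{M_1} + B_1 = c_{M_0}` a.s. for the family `c`. -/
def DegenD (c : S → ℝ) : Prop :=
  ∀ᵐ ω ∂ X.Pπ, X.A 0 ω * c (X.M 1 ω) + X.B 0 ω = c (X.M 0 ω)

/-- The dual degeneracy condition: `A_1 c_{M_0} + B_1 = c_{M_1}` a.s. for the family `c`. -/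
def DegenDdual (c : S → ℝ) : Prop :=
  ∀ᵐ ω ∂ X.Pπ, X.A 0 ω * c (X.M 0 ω) + X.B 0 ω = c (X.M 1 ω)

end MMSetting

end Perpetuities

namespace Perpetuities

open MMSetting

/-!
Fix a state `i` and cut the path of the chain at its successive visits to `i`. By the strong Markov
property the excursions are independent and identically distributed, and each of them enters the
argument only through the triple `(-log |Π_τ|, W, τ)`. Along the visits `|Π_{τ_n}|` is the
exponential of minus a random walk, and the largest `|Π_{k-1} B_k|` over the `n`-th excursion is
`|Π_{τ_n}|` times an independent copy of `W`. The assertions thereby become statements about a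
perturbed random walk: a Green function bound shows that the `J`-moment of `log⁺ W` makes the
perturbed exponentials summable, and conversely boundedness of the perturbed walk forces the walk
to drift to infinity and the `J`-moment to be finite. Irreducibility carries the conclusions from
one starting state to all the others.
-/

section ProductMeasure

lemma dependsOn_indicator_one {ι : Type*} {X : ι → Type*} {s : Set ι} {G : Set (∀ i, X i)}
    (hG : DependsOn (· ∈ G) s) : DependsOn (G.indicator (1 : (∀ i, X i) → ℝ≥0∞)) s :=
  fun x y h => by classical simp only [Set.indicator_apply, hG h, Pi.one_apply]

variable {ι : Type*} {X : ι → Type*} [∀ i, MeasurableSpace (X i)] {μ : ∀ i, Measure (X i)}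
  [∀ i, IsProbabilityMeasure (μ i)] {s : Set ι}

open scoped Classical in
lemma measurable_piecewise_pair (s : Set ι) :
    Measurable fun z : (∀ i, X i) × (∀ i, X i) => s.piecewise z.1 z.2 := by
  refine measurable_pi_lambda _ fun i => ?_
  by_cases hi : i ∈ s
  · simp only [Set.piecewise, hi, if_true]
    fun_prop
  · simp only [Set.piecewise, hi, if_false]
    fun_prop

open scoped Classical in
lemma map_piecewise_infinitePi (s : Set ι) :
    ((Measure.infinitePi μ).prod (Measure.infinitePi μ)).map (fun z => s.piecewise z.1 z.2)
      = Measure.infinitePi μ := by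
  refine Measure.eq_infinitePi _ fun u t ht => ?_
  rw [Measure.map_apply (measurable_piecewise_pair s)
    (.pi u.countable_toSet fun i _ => ht i)]
  have preimage_box : (fun z : (∀ i, X i) × (∀ i, X i) => s.piecewise z.1 z.2) ⁻¹' (u : Set ι).pi t
      = (({i ∈ u | i ∈ s} : Finset ι) : Set ι).pi t
        ×ˢ (({i ∈ u | i ∉ s} : Finset ι) : Set ι).pi t := by
    ext z
    simp only [Set.mem_preimage, Set.mem_pi, Set.mem_prod, Finset.coe_filter, Set.mem_ofPred_eq,
      Finset.mem_coe, Set.piecewise]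
    grind
  rw [preimage_box, Measure.prod_prod, Measure.infinitePi_pi _ fun i _ => ht i,
    Measure.infinitePi_pi _ fun i _ => ht i, Finset.prod_filter_mul_prod_filter_not]

lemma lintegral_diag_infinitePi {F : (∀ i, X i) → (∀ i, X i) → ℝ≥0∞}
    (hF : Measurable (Function.uncurry F)) (hs : ∀ y, DependsOn (fun x => F x y) s)
    (hsc : ∀ x, DependsOn (F x) sᶜ) :
    ∫⁻ x, F x x ∂Measure.infinitePi μ
      = ∫⁻ x, ∫⁻ y, F x y ∂Measure.infinitePi μ ∂Measure.infinitePi μ := by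
  classical
  have hdiag : Measurable fun x => F x x := hF.comp (measurable_id.prodMk measurable_id)
  rw [← lintegral_prod (fun z => F z.1 z.2) hF.aemeasurable]
  nth_rw 1 [← map_piecewise_infinitePi s]
  rw [lintegral_map hdiag (measurable_piecewise_pair s)]
  refine lintegral_congr fun z => ?_
  calc F (s.piecewise z.1 z.2) (s.piecewise z.1 z.2)
      = F z.1 (s.piecewise z.1 z.2) := hs _ fun i hi => s.piecewise_eq_of_mem _ _ hi
    _ = F z.1 z.2 := hsc _ fun i hi => s.piecewise_eq_of_notMem _ _ hi

lemma measure_inter_of_dependsOn {G H : Set (∀ i, X i)} (hG : MeasurableSet G)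
    (hH : MeasurableSet H) (hGs : DependsOn (· ∈ G) s) (hHs : DependsOn (· ∈ H) sᶜ) :
    Measure.infinitePi μ (G ∩ H) = Measure.infinitePi μ G * Measure.infinitePi μ H := by
  set gi : (∀ i, X i) → ℝ≥0∞ := G.indicator 1
  set hi : (∀ i, X i) → ℝ≥0∞ := H.indicator 1
  have hgi : Measurable gi := measurable_one.indicator hG
  have hhi : Measurable hi := measurable_one.indicator hH
  calc Measure.infinitePi μ (G ∩ H)
      = ∫⁻ x, gi x * hi x ∂Measure.infinitePi μ := by
        rw [← lintegral_indicator_one (hG.inter hH), Set.inter_indicator_one]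
        rfl
    _ = ∫⁻ x, ∫⁻ y, gi x * hi y ∂Measure.infinitePi μ ∂Measure.infinitePi μ :=
        lintegral_diag_infinitePi
          ((hgi.comp measurable_fst).mul (hhi.comp measurable_snd))
          (fun y x x' h => congrArg (· * hi y) (dependsOn_indicator_one hGs h))
          fun x y y' h => congrArg (gi x * ·) (dependsOn_indicator_one hHs h)
    _ = Measure.infinitePi μ G * Measure.infinitePi μ H := by
        simp_rw [lintegral_const_mul _ hhi, lintegral_mul_const _ hgi, gi, hi,
          lintegral_indicator_one hG, lintegral_indicator_one hH]

lemma lintegral_eval_of_dependsOn {i : ι} (hi : i ∉ s) {F : (∀ i, X i) → X i → ℝ≥0∞}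
    (hF : Measurable (Function.uncurry F)) (hs : ∀ e, DependsOn (fun x => F x e) s) :
    ∫⁻ x, F x (x i) ∂Measure.infinitePi μ = ∫⁻ e, ∫⁻ x, F x e ∂Measure.infinitePi μ ∂μ i := by
  have hFi : Measurable (Function.uncurry fun x y : ∀ i, X i => F x (y i)) :=
    hF.comp (measurable_fst.prodMk ((measurable_pi_apply i).comp measurable_snd))
  rw [lintegral_diag_infinitePi hFi (fun y => hs (y i)) fun x y y' h => by rw [h i hi],
    lintegral_lintegral_swap hFi.aemeasurable]
  exact (measurePreserving_eval_infinitePi μ i).lintegral_comp hF.lintegral_prod_left'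

lemma measure_eval_of_dependsOn {i : ι} (hi : i ∉ s) {H : Set ((∀ i, X i) × X i)}
    (hH : MeasurableSet H) (hs : ∀ e, DependsOn (fun x => (x, e) ∈ H) s) :
    Measure.infinitePi μ {x | (x, x i) ∈ H} = ∫⁻ e, Measure.infinitePi μ {x | (x, e) ∈ H} ∂μ i := by
  have hdiag : MeasurableSet {x : ∀ i, X i | (x, x i) ∈ H} :=
    measurable_id.prodMk (measurable_pi_apply i) hH
  have hslice (e : X i) : MeasurableSet {x | (x, e) ∈ H} := measurable_prodMk_right hH
  have key := lintegral_eval_of_dependsOn (μ := μ) hi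
    (F := fun x e => H.indicator 1 (x, e)) (measurable_one.indicator hH)
    fun e x x' h => by classical simp only [Set.indicator_apply, hs e h, Pi.one_apply]
  rw [← lintegral_indicator_one hdiag]
  simp_rw [← lintegral_indicator_one (hslice _)]
  exact key

end ProductMeasure

section Shift

/-- The sequence `x` with its first `n` terms removed. -/
def shift {α : Type*} (n : ℕ) (x : ℕ → α) : ℕ → α := fun k => x (n + k)

variable {E : Type*}

@[simp]
lemma shift_apply (n : ℕ) (x : ℕ → E) (k : ℕ) : shift n x k = x (n + k) := rfl

lemma shift_shift (n m : ℕ) (x : ℕ → E) : shift n (shift m x) = shift (m + n) x := by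
  ext k
  simp only [shift_apply, add_assoc]

variable [MeasurableSpace E]

lemma measurable_shift (n : ℕ) : Measurable (shift n : (ℕ → E) → ℕ → E) :=
  measurable_pi_lambda _ fun _ => measurable_pi_apply _

/-- The law of an i.i.d. sequence with common distribution `μ`. -/
abbrev iidLaw (μ : Measure E) : Measure (ℕ → E) := Measure.infinitePi fun _ => μ

variable (μ : Measure E) [IsProbabilityMeasure μ]

lemma measurePreserving_shift (n : ℕ) : MeasurePreserving (shift n) (iidLaw μ) (iidLaw μ) :=
  ⟨measurable_shift n, Measure.map_infinitePi_infinitePi_of_inj (P := fun _ => μ)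
    (add_right_injective n)⟩

lemma measure_inter_shift_preimage {n : ℕ} {G H : Set (ℕ → E)} (hG : MeasurableSet G)
    (hH : MeasurableSet H) (hGn : DependsOn (· ∈ G) (Set.Iio n)) :
    iidLaw μ (G ∩ shift n ⁻¹' H) = iidLaw μ G * iidLaw μ H := by
  rw [measure_inter_of_dependsOn hG (measurable_shift n hH) hGn,
    (measurePreserving_shift μ n).measure_preimage hH.nullMeasurableSet]
  intro x y h
  have : shift n x = shift n y := funext fun k => h (n + k) (by simp)
  simp only [Set.mem_preimage, this]

lemma ae_all_eval {p : E → Prop} (hp : ∀ᵐ e ∂μ, p e) : ∀ᵐ x ∂iidLaw μ, ∀ n, p (x n) :=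
  ae_all_iff.2 fun n =>
    (measurePreserving_eval_infinitePi (fun _ => μ) n).quasiMeasurePreserving.ae hp

lemma ae_all_shift {p : (ℕ → E) → Prop} (hp : ∀ᵐ x ∂iidLaw μ, p x) :
    ∀ᵐ x ∂iidLaw μ, ∀ n, p (shift n x) :=
  ae_all_iff.2 fun n => (measurePreserving_shift μ n).quasiMeasurePreserving.ae hp

/-- The sequence `x` with the order of its first `n` terms reversed. -/
def reverse (n : ℕ) (x : ℕ → E) : ℕ → E := fun k => x (if k < n then n - 1 - k else k)

lemma measurePreserving_reverse (n : ℕ) : MeasurePreserving (reverse n) (iidLaw μ) (iidLaw μ) := by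
  refine ⟨measurable_pi_lambda _ fun _ => measurable_pi_apply _,
    Measure.map_infinitePi_infinitePi_of_inj (P := fun _ => μ) fun j k h => ?_⟩
  split_ifs at h <;> omega

end Shift

section Walk

variable {E : Type*}

/-- The random walk with increments `ξ (x 0), ξ (x 1), …`, started at `0`. -/
def walk (ξ : E → ℝ) (n : ℕ) (x : ℕ → E) : ℝ := ∑ k ∈ Finset.range n, ξ (x k)

@[simp]
lemma walk_zero (ξ : E → ℝ) (x : ℕ → E) : walk ξ 0 x = 0 := Finset.sum_range_zero _

lemma walk_succ (ξ : E → ℝ) (n : ℕ) (x : ℕ → E) : walk ξ (n + 1) x = walk ξ n x + ξ (x n) :=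
  Finset.sum_range_succ _ _

lemma walk_add (ξ : E → ℝ) (n m : ℕ) (x : ℕ → E) :
    walk ξ (n + m) x = walk ξ n x + walk ξ m (shift n x) :=
  Finset.sum_range_add _ _ _

lemma dependsOn_walk (ξ : E → ℝ) (n : ℕ) : DependsOn (walk ξ n) (Set.Iio n) := fun _ _ h =>
  Finset.sum_congr rfl fun k hk => by rw [h k (Finset.mem_range.mp hk)]

lemma walk_nonneg {ξ : E → ℝ} (hξ : ∀ e, 0 ≤ ξ e) (n : ℕ) (x : ℕ → E) : 0 ≤ walk ξ n x :=
  Finset.sum_nonneg fun _ _ => hξ _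

lemma walk_reverse (ξ : E → ℝ) {n k : ℕ} (hk : k ≤ n) (x : ℕ → E) :
    walk ξ k (reverse n x) = walk ξ n x - walk ξ (n - k) x := by
  induction k with
  | zero => simp
  | succ k ih =>
    have reverse_apply : reverse n x k = x (n - (k + 1)) := by
      rw [reverse, if_pos (by omega)]
      congr 1
      omega
    rw [walk_succ, ih (by omega), show n - k = n - (k + 1) + 1 by omega, walk_succ, reverse_apply]
    ring

lemma walk_nonneg_of_shift {ξ : E → ℝ} {δ c : ℝ} {j : ℕ} {x : ℕ → E} (hδ : 0 ≤ δ)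
    (hx : ∀ i < j, δ ≤ ξ (x i)) (hc : c ≤ j * δ) (hshift : ∀ k, -c ≤ walk ξ k (shift j x))
    (k : ℕ) : 0 ≤ walk ξ k x := by
  have hclimb (k : ℕ) (hk : k ≤ j) : k * δ ≤ walk ξ k x := by
    have hsum := Finset.card_nsmul_le_sum (Finset.range k) (fun i => ξ (x i)) δ fun i hi =>
      hx i ((Finset.mem_range.1 hi).trans_le hk)
    rwa [Finset.card_range, nsmul_eq_mul] at hsum
  rcases le_total k j with hk | hk
  · exact le_trans (by positivity) (hclimb k hk)
  · obtain ⟨i, rfl⟩ := Nat.exists_eq_add_of_le hk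
    rw [walk_add]
    linarith [hshift i, hclimb j le_rfl]

variable [MeasurableSpace E]

@[fun_prop]
lemma measurable_walk {ξ : E → ℝ} (hξ : Measurable ξ) (n : ℕ) : Measurable (walk ξ n) :=
  Finset.measurable_fun_sum _ fun k _ => hξ.comp (measurable_pi_apply k)

end Walk

section TruncatedMean

variable {E : Type*} [MeasurableSpace E] {μ : Measure E} {ξ : E → ℝ}

variable (μ ξ) in
/-- The truncated mean `E (ξ⁺ ∧ y)`. -/
def truncMean (y : ℝ) : ℝ := ∫ e, min (max (ξ e) 0) y ∂μ

lemma truncMean_nonneg {y : ℝ} (hy : 0 ≤ y) : 0 ≤ truncMean μ ξ y :=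
  integral_nonneg fun _ => le_min (le_max_right _ _) hy

variable (μ ξ) in
/-- The ratio `y / E (ξ⁺ ∧ y)`, with value `0` at `y = 0`. It controls the Green function of the
walk with increments `ξ`: from above for the walk killed below `0`, from below if `ξ ≥ 0`. -/
def truncRatio (y : ℝ) : ℝ := y / truncMean μ ξ y

lemma truncRatio_nonneg {y : ℝ} (hy : 0 ≤ y) : 0 ≤ truncRatio μ ξ y :=
  div_nonneg hy (truncMean_nonneg hy)

lemma exists_pos_measure_lt_ne_zero (hpos : μ {e | 0 < ξ e} ≠ 0) :
    ∃ δ > 0, μ {e | δ < ξ e} ≠ 0 := by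
  by_contra! h
  refine hpos (measure_mono_null (fun e (he : 0 < ξ e) => Set.mem_iUnion.2 ?_)
    (measure_iUnion_null fun k : ℕ => h (1 / ((k : ℝ) + 1)) (by positivity)))
  exact exists_nat_one_div_lt he

variable [IsProbabilityMeasure μ] (hξ : Measurable ξ)

include hξ

lemma integrable_trunc (y : ℝ) : Integrable (fun e => min (max (ξ e) 0) y) μ := by
  refine (integrable_const |y|).mono' (by fun_prop) (Eventually.of_forall fun e => ?_)
  rw [Real.norm_eq_abs, abs_le]
  exact ⟨le_min ((neg_nonpos.2 (abs_nonneg y)).trans (le_max_right _ _)) (neg_abs_le y),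
    (min_le_right _ _).trans (le_abs_self y)⟩

lemma monotone_truncMean : Monotone (truncMean μ ξ) := fun _ _ h =>
  integral_mono (integrable_trunc hξ _) (integrable_trunc hξ _) fun _ => min_le_min_left _ h

lemma ofReal_truncMean {y : ℝ} (hy : 0 ≤ y) :
    ENNReal.ofReal (truncMean μ ξ y) = ∫⁻ e, ENNReal.ofReal (min (max (ξ e) 0) y) ∂μ :=
  ofReal_integral_eq_lintegral_ofReal (integrable_trunc hξ y)
    (Eventually.of_forall fun _ => le_min (le_max_right _ _) hy)

lemma exists_mul_min_le_truncMean (hpos : μ {e | 0 < ξ e} ≠ 0) :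
    ∃ δ > 0, ∃ q > 0, ∀ y > 0, q * min δ y ≤ truncMean μ ξ y := by
  obtain ⟨δ, hδ, hμδ⟩ := exists_pos_measure_lt_ne_zero hpos
  have hD : MeasurableSet {e | δ < ξ e} := measurableSet_lt measurable_const hξ
  refine ⟨δ, hδ, μ.real {e | δ < ξ e}, ENNReal.toReal_pos hμδ (measure_ne_top _ _),
    fun y hy => ?_⟩
  calc μ.real {e | δ < ξ e} * min δ y
      = ∫ e, {e | δ < ξ e}.indicator (fun _ => min δ y) e ∂μ := by
        rw [integral_indicator_const _ hD, smul_eq_mul]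
    _ ≤ truncMean μ ξ y := by
        refine integral_mono ((integrable_const _).indicator hD) (integrable_trunc hξ y)
          (Set.indicator_le' (fun e he => ?_) fun e _ => le_min (le_max_right _ _) hy.le)
        exact min_le_min_right _ ((le_of_lt he).trans (le_max_left _ _))

lemma truncMean_pos (hpos : μ {e | 0 < ξ e} ≠ 0) {y : ℝ} (hy : 0 < y) : 0 < truncMean μ ξ y := by
  obtain ⟨δ, hδ, q, hq, h⟩ := exists_mul_min_le_truncMean hξ hpos
  exact (mul_pos hq (lt_min hδ hy)).trans_le (h y hy)

lemma measurable_truncRatio : Measurable (truncRatio μ ξ) :=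
  measurable_id.div (monotone_truncMean hξ).measurable

lemma truncRatio_add_le (hpos : μ {e | 0 < ξ e} ≠ 0) {y z : ℝ} (hy : 0 ≤ y) (hz : 0 ≤ z) :
    truncRatio μ ξ (y + z) ≤ truncRatio μ ξ y + truncRatio μ ξ z := by
  rcases hy.eq_or_lt with rfl | hy
  · simp [truncRatio]
  rcases hz.eq_or_lt with rfl | hz
  · simp [truncRatio]
  rw [truncRatio, add_div]
  exact add_le_add
    (div_le_div_of_nonneg_left hy.le (truncMean_pos hξ hpos hy)
      (monotone_truncMean hξ (le_add_of_nonneg_right hz.le)))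
    (div_le_div_of_nonneg_left hz.le (truncMean_pos hξ hpos hz)
      (monotone_truncMean hξ (le_add_of_nonneg_left hy.le)))

lemma exists_truncRatio_le (hpos : μ {e | 0 < ξ e} ≠ 0) :
    ∃ C, ∀ y > 0, truncRatio μ ξ y ≤ C * (1 + y) := by
  obtain ⟨δ, hδ, q, hq, h⟩ := exists_mul_min_le_truncMean hξ hpos
  refine ⟨(1 + 1 / δ) / q, fun y hy => ?_⟩
  have key : y ≤ (1 + 1 / δ) * (1 + y) * min δ y := by
    rcases le_total δ y with hδy | hδy
    · rw [min_eq_left hδy]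
      have : (1 + 1 / δ) * (1 + y) * δ = (δ + 1) * (1 + y) := by field_simp
      nlinarith
    · rw [min_eq_right hδy]
      have : 0 < 1 / δ := by positivity
      exact le_mul_of_one_le_left hy.le (by nlinarith)
  calc truncRatio μ ξ y
      ≤ y / (q * min δ y) :=
        div_le_div_of_nonneg_left hy.le (mul_pos hq (lt_min hδ hy)) (h y hy)
    _ ≤ ((1 + 1 / δ) * (1 + y) * min δ y) / (q * min δ y) := by gcongr
    _ = (1 + 1 / δ) / q * (1 + y) := by
        have : min δ y ≠ 0 := (lt_min hδ hy).ne'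
        field_simp

end TruncatedMean

section GreenFunction

open scoped Classical in
lemma sum_record_increments_le {S : ℕ → ℝ} (hS : 0 ≤ S 0) {y : ℝ} (hy : 0 ≤ y) (m : ℕ) :
    ∑ n ∈ Finset.range m with (∀ k ≤ n, S k ≤ S n) ∧ S n ≤ y, min (max (S (n + 1) - S n) 0) y
      ≤ min (partialSups S m) (2 * y) := by
  induction m with
  | zero => simp [hS, hy]
  | succ m ih =>
    rw [Finset.range_add_one, Finset.filter_insert, partialSups_add_one]
    have hgrow := min_le_min_right (2 * y) (le_sup_left (a := partialSups S m) (b := S (m + 1)))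
    split_ifs with hm
    · have hrecord : partialSups S m = S m :=
        (partialSups_le_iff.2 hm.1).antisymm (le_partialSups S m)
      rw [Finset.sum_insert (by simp), hrecord]
      rw [hrecord, min_eq_left (by linarith [hm.2])] at ih
      have hmax : S m + max (S (m + 1) - S m) 0 = S m ⊔ S (m + 1) := by
        rw [← max_add_add_left, add_zero, add_sub_cancel, max_comm]
      refine le_min ?_ ?_
      · linarith [min_le_left (max (S (m + 1) - S m) 0) y]
      · linarith [min_le_right (max (S (m + 1) - S m) 0) y, hm.2]
    · exact ih.trans hgrow

open scoped Classical in
lemma min_le_sum_increments {S : ℕ → ℝ} (hS : S 0 = 0) (hmono : Monotone S) (y : ℝ) (m : ℕ) :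
    min (S m) y ≤ ∑ n ∈ Finset.range m with S n < y, min (S (n + 1) - S n) y := by
  induction m with
  | zero => simp [hS]
  | succ m ih =>
    have hpos : 0 ≤ S m := hS ▸ hmono (Nat.zero_le m)
    rw [Finset.range_add_one, Finset.filter_insert]
    split_ifs with hm
    · rw [Finset.sum_insert (by simp)]
      rw [min_eq_left hm.le] at ih
      rcases min_cases (S (m + 1) - S m) y with ⟨h, -⟩ | ⟨h, -⟩
      · linarith [min_le_left (S (m + 1)) y]
      · linarith [min_le_right (S (m + 1)) y]
    · rw [min_eq_right (not_lt.1 hm)] at ih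
      exact (min_le_right _ _).trans ih

variable {E : Type*} [MeasurableSpace E] {μ : Measure E} [IsProbabilityMeasure μ]

lemma tsum_measure_mul_lintegral {G : ℕ → Set (ℕ → E)} (hG : ∀ n, MeasurableSet (G n))
    (hGn : ∀ n, DependsOn (· ∈ G n) (Set.Iio n)) {f : E → ℝ≥0∞} (hf : Measurable f) :
    (∑' n, iidLaw μ (G n)) * ∫⁻ e, f e ∂μ
      = ∫⁻ x, ∑' n, (G n).indicator (fun x => f (x n)) x ∂iidLaw μ := by
  have hfn (n : ℕ) : Measurable fun x : ℕ → E => f (x n) := hf.comp (measurable_pi_apply n)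
  rw [lintegral_tsum fun n => ((hfn n).indicator (hG n)).aemeasurable, ← ENNReal.tsum_mul_right]
  refine tsum_congr fun n => ?_
  have h1 : Measurable ((G n).indicator (1 : (ℕ → E) → ℝ≥0∞)) := measurable_one.indicator (hG n)
  calc iidLaw μ (G n) * ∫⁻ e, f e ∂μ
      = ∫⁻ e, ∫⁻ x, (G n).indicator 1 x * f e ∂iidLaw μ ∂μ := by
        simp_rw [lintegral_mul_const _ h1, lintegral_indicator_one (hG n),
          lintegral_const_mul _ hf]
    _ = ∫⁻ x, (G n).indicator 1 x * f (x n) ∂iidLaw μ :=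
        (lintegral_eval_of_dependsOn (μ := fun _ : ℕ => μ) Set.self_notMem_Iio
          (F := fun x e => (G n).indicator 1 x * f e)
          ((h1.comp measurable_fst).mul (hf.comp measurable_snd))
          fun e x y h => congrArg (· * f e) (dependsOn_indicator_one (hGn n) h)).symm
    _ = ∫⁻ x, (G n).indicator (fun x => f (x n)) x ∂iidLaw μ := by
        refine lintegral_congr fun x => ?_
        by_cases hx : x ∈ G n <;> simp [hx]

variable {ξ : E → ℝ}

lemma measure_pos_ne_zero_of_tendsto_walk
    (hS : ∀ᵐ x ∂iidLaw μ, Tendsto (fun n => walk ξ n x) atTop atTop) : μ {e | 0 < ξ e} ≠ 0 := by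
  intro h
  obtain ⟨x, hx, hxξ⟩ := (hS.and (ae_all_eval μ (measure_eq_zero_iff_ae_notMem.1 h))).exists
  obtain ⟨m, hm⟩ := (hx.eventually_gt_atTop 0).exists
  exact hm.not_ge (Finset.sum_nonpos fun k _ => not_lt.1 (hxξ k))

variable (hξ : Measurable ξ)

include hξ

lemma measure_walk_nonneg_eq_measure_walk_record (n : ℕ) (y : ℝ) :
    iidLaw μ {x | (∀ k ≤ n, 0 ≤ walk ξ k x) ∧ walk ξ n x ≤ y}
      = iidLaw μ {x | (∀ k ≤ n, walk ξ k x ≤ walk ξ n x) ∧ walk ξ n x ≤ y} := by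
  have hrec : MeasurableSet {x | (∀ k ≤ n, walk ξ k x ≤ walk ξ n x) ∧ walk ξ n x ≤ y} := by
    measurability
  rw [← (measurePreserving_reverse μ n).measure_preimage hrec.nullMeasurableSet]
  congr 1
  ext x
  simp only [Set.mem_preimage, Set.mem_ofPred_eq, walk_reverse ξ le_rfl, Nat.sub_self, walk_zero,
    sub_zero]
  refine and_congr_left fun _ => ⟨fun h k hk => ?_, fun h k hk => ?_⟩
  · rw [walk_reverse ξ hk]
    linarith [h (n - k) (Nat.sub_le n k)]
  · have := h (n - k) (Nat.sub_le n k)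
    rw [walk_reverse ξ (Nat.sub_le n k), Nat.sub_sub_self hk] at this
    linarith

lemma tsum_measure_walk_nonneg_le (hpos : μ {e | 0 < ξ e} ≠ 0) {y : ℝ} (hy : 0 < y) :
    ∑' n, iidLaw μ {x | (∀ k ≤ n, 0 ≤ walk ξ k x) ∧ walk ξ n x ≤ y}
      ≤ ENNReal.ofReal (2 * truncRatio μ ξ y) := by
  classical
  set R : ℕ → Set (ℕ → E) := fun n => {x | (∀ k ≤ n, walk ξ k x ≤ walk ξ n x) ∧ walk ξ n x ≤ y}
  have hR (n : ℕ) : MeasurableSet (R n) := by measurability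
  have hRn (n : ℕ) : DependsOn (· ∈ R n) (Set.Iio n) := fun x x' h => by
    have hk (k : ℕ) (hk : k ≤ n) : walk ξ k x = walk ξ k x' :=
      dependsOn_walk ξ k fun j hj => h j (lt_of_lt_of_le hj hk)
    simp only [R, Set.mem_ofPred_eq, hk n le_rfl]
    exact propext <| and_congr_left fun _ => forall₂_congr fun k hkn => by rw [hk k hkn]
  have hsum (x : ℕ → E) :
      ∑' n, (R n).indicator (fun x => ENNReal.ofReal (min (max (ξ (x n)) 0) y)) x
        ≤ ENNReal.ofReal (2 * y) := by
    refine ENNReal.tsum_le_of_sum_range_le fun m => ?_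
    have h := sum_record_increments_le (S := fun n => walk ξ n x) (by simp) hy.le m
    simp only [walk_succ, add_sub_cancel_left] at h
    simp only [Set.indicator_apply, R, Set.mem_ofPred_eq, ← Finset.sum_filter]
    rw [← ENNReal.ofReal_sum_of_nonneg fun n _ => le_min (le_max_right _ _) hy.le]
    exact ENNReal.ofReal_le_ofReal (h.trans (min_le_right _ _))
  have hA := truncMean_pos hξ hpos hy
  rw [truncRatio, ← mul_div_assoc, ENNReal.ofReal_div_of_pos hA,
    ENNReal.le_div_iff_mul_le (Or.inl (ENNReal.ofReal_pos.2 hA).ne') (Or.inl ENNReal.ofReal_ne_top)]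
  simp_rw [measure_walk_nonneg_eq_measure_walk_record hξ]
  rw [ofReal_truncMean hξ hy.le, tsum_measure_mul_lintegral hR hRn (by fun_prop)]
  exact (lintegral_mono hsum).trans_eq (by simp)

lemma truncRatio_le_tsum_measure_walk (hξ0 : ∀ e, 0 ≤ ξ e)
    (hS : ∀ᵐ x ∂iidLaw μ, Tendsto (fun n => walk ξ n x) atTop atTop) {y : ℝ} (hy : 0 < y) :
    ENNReal.ofReal (truncRatio μ ξ y) ≤ ∑' n, iidLaw μ {x | walk ξ n x < y} := by
  classical
  set R : ℕ → Set (ℕ → E) := fun n => {x | walk ξ n x < y}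
  have hR (n : ℕ) : MeasurableSet (R n) := measurableSet_lt (measurable_walk hξ n) measurable_const
  have hRn (n : ℕ) : DependsOn (· ∈ R n) (Set.Iio n) := fun x x' h => by
    simp only [R, Set.mem_ofPred_eq, dependsOn_walk ξ n h]
  have hsum : ∀ᵐ x ∂iidLaw μ, ENNReal.ofReal y
      ≤ ∑' n, (R n).indicator (fun x => ENNReal.ofReal (min (max (ξ (x n)) 0) y)) x := by
    filter_upwards [hS] with x hx
    obtain ⟨m, hm⟩ := (hx.eventually_ge_atTop y).exists
    have hmono : Monotone fun n => walk ξ n x :=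
      monotone_nat_of_le_succ fun n => by rw [walk_succ]; linarith [hξ0 (x n)]
    have h := min_le_sum_increments (walk_zero ξ x) hmono y m
    simp only [walk_succ, add_sub_cancel_left, min_eq_right hm] at h
    refine le_trans ?_ (ENNReal.sum_le_tsum (Finset.range m))
    simp only [Set.indicator_apply, R, Set.mem_ofPred_eq, ← Finset.sum_filter, max_eq_left (hξ0 _)]
    rw [← ENNReal.ofReal_sum_of_nonneg fun n _ => le_min (hξ0 _) hy.le]
    exact ENNReal.ofReal_le_ofReal h
  have hA := truncMean_pos hξ (measure_pos_ne_zero_of_tendsto_walk hS) hy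
  rw [truncRatio, ENNReal.ofReal_div_of_pos hA]
  refine ENNReal.div_le_of_le_mul ?_
  rw [ofReal_truncMean hξ hy.le, tsum_measure_mul_lintegral hR hRn (by fun_prop)]
  exact le_trans (by simp) (lintegral_mono_ae hsum)

end GreenFunction

section ExponentialFunctional

variable {E : Type*} [MeasurableSpace E] {μ : Measure E} [IsProbabilityMeasure μ] {ξ ℓ : E → ℝ}

lemma ae_exists_shift_of_walk_nonneg {p : (ℕ → E) → Prop}
    (hS : ∀ᵐ x ∂iidLaw μ, Tendsto (fun n => walk ξ n x) atTop atTop)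
    (hp : ∀ᵐ x ∂iidLaw μ, (∀ k, 0 ≤ walk ξ k x) → p x) :
    ∀ᵐ x ∂iidLaw μ, ∃ N, p (shift N x) := by
  filter_upwards [hS, ae_all_shift μ hp] with x hx hpx
  rw [← Nat.cofinite_eq_atTop] at hx
  obtain ⟨N, hN⟩ := hx.exists_forall_le
  refine ⟨N, hpx N fun k => ?_⟩
  have h := hN (N + k)
  rw [walk_add] at h
  exact nonneg_of_le_add_right h

variable (hξ : Measurable ξ)

include hξ

lemma lintegral_truncRatio_add_ne_top (hpos : μ {e | 0 < ξ e} ≠ 0) {F : Type*}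
    [MeasurableSpace F] {ν : Measure F} {f g : F → ℝ} (hf : Measurable f) (hf0 : ∀ e, 0 ≤ f e)
    (hg0 : ∀ e, 0 ≤ g e) (hfint : ∫⁻ e, ENNReal.ofReal (truncRatio μ ξ (f e)) ∂ν ≠ ⊤)
    (hgint : ∫⁻ e, ENNReal.ofReal (truncRatio μ ξ (g e)) ∂ν ≠ ⊤) :
    ∫⁻ e, ENNReal.ofReal (truncRatio μ ξ (f e + g e)) ∂ν ≠ ⊤ := by
  have hmeas : Measurable fun e => ENNReal.ofReal (truncRatio μ ξ (f e)) :=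
    ((measurable_truncRatio hξ).comp hf).ennreal_ofReal
  refine ne_top_of_le_ne_top (ENNReal.add_ne_top.2 ⟨hfint, hgint⟩) ?_
  rw [← lintegral_add_left hmeas]
  refine lintegral_mono fun e => ?_
  rw [← ENNReal.ofReal_add (truncRatio_nonneg (hf0 e)) (truncRatio_nonneg (hg0 e))]
  exact ENNReal.ofReal_le_ofReal (truncRatio_add_le hξ hpos (hf0 e) (hg0 e))

lemma lintegral_truncRatio_ne_top_of_integrable (hpos : μ {e | 0 < ξ e} ≠ 0) {F : Type*}
    [MeasurableSpace F] {ν : Measure F} [IsFiniteMeasure ν] {f : F → ℝ} (hf0 : ∀ e, 0 ≤ f e)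
    (hf : Integrable f ν) : ∫⁻ e, ENNReal.ofReal (truncRatio μ ξ (f e)) ∂ν ≠ ⊤ := by
  obtain ⟨C, hC⟩ := exists_truncRatio_le hξ hpos
  have hbound : Integrable (fun e => |C| * (1 + f e)) ν := ((integrable_const 1).add hf).const_mul _
  refine ne_top_of_le_ne_top hbound.lintegral_lt_top.ne
    (lintegral_mono fun e => ENNReal.ofReal_le_ofReal ?_)
  have h1 := hf0 e
  rcases h1.eq_or_lt with h | h
  · rw [← h, truncRatio, zero_div]
    positivity
  · exact (hC _ h).trans (by gcongr; exact le_abs_self C)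

lemma tsum_exp_mul_tsum_measure_walk_nonneg_ne_top (hpos : μ {e | 0 < ξ e} ≠ 0) {c : ℝ}
    (hc : 0 < c) :
    ∑' m : ℕ, ENNReal.ofReal (Real.exp (-(c * m))) *
      ∑' n, iidLaw μ {x | (∀ k ≤ n, 0 ≤ walk ξ k x) ∧ walk ξ n x ≤ m + 1} ≠ ⊤ := by
  obtain ⟨C, hC⟩ := exists_truncRatio_le hξ hpos
  have hsum : Summable fun m : ℕ => Real.exp (-(c * m)) * (2 * (C * (1 + (m + 1)))) := by
    have h0 := Real.summable_exp_nat_mul_iff.2 (neg_lt_zero.2 hc)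
    have h1 := Real.summable_pow_mul_exp_neg_nat_mul 1 hc
    refine ((h0.mul_left (4 * C)).add (h1.mul_left (2 * C))).congr fun m => ?_
    rw [mul_neg, neg_mul, mul_comm (m : ℝ)]
    ring
  refine ne_top_of_le_ne_top hsum.tsum_ofReal_ne_top (ENNReal.tsum_le_tsum fun m => ?_)
  rw [ENNReal.ofReal_mul (Real.exp_pos _).le]
  gcongr
  refine (tsum_measure_walk_nonneg_le hξ hpos (by positivity)).trans ?_
  exact ENNReal.ofReal_le_ofReal (by linarith [hC (m + 1) (by positivity)])

lemma ae_summable_exp_neg_walk_of_nonneg (hpos : μ {e | 0 < ξ e} ≠ 0) {c : ℝ} (hc : 0 < c) :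
    ∀ᵐ x ∂iidLaw μ, (∀ k, 0 ≤ walk ξ k x) → Summable fun n => Real.exp (-(c * walk ξ n x)) := by
  set G : ℕ → ℕ → Set (ℕ → E) := fun m n => {x | (∀ k ≤ n, 0 ≤ walk ξ k x) ∧ walk ξ n x ≤ m + 1}
  have hGm (m n : ℕ) : MeasurableSet (G m n) := by measurability
  have hG (m n : ℕ) : Measurable ((G m n).indicator (1 : (ℕ → E) → ℝ≥0∞)) :=
    measurable_one.indicator (hGm m n)
  set layers : (ℕ → E) → ℝ≥0∞ := fun x =>
    ∑' m : ℕ, ENNReal.ofReal (Real.exp (-(c * m))) * ∑' n, (G m n).indicator 1 x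
  have hlayers_meas : Measurable layers :=
    Measurable.tsum fun m => (Measurable.tsum (hG m)).const_mul _
  have hlayers : ∫⁻ x, layers x ∂iidLaw μ ≠ ⊤ := by
    rw [lintegral_tsum fun m => ((Measurable.tsum (hG m)).const_mul _).aemeasurable]
    simp_rw [lintegral_const_mul _ (Measurable.tsum (hG _)),
      lintegral_tsum fun n => (hG _ n).aemeasurable, lintegral_indicator_one (hGm _ _)]
    exact tsum_exp_mul_tsum_measure_walk_nonneg_ne_top hξ hpos hc
  filter_upwards [ae_lt_top hlayers_meas hlayers] with x hx hx0
  have hle (n : ℕ) : ENNReal.ofReal (Real.exp (-(c * walk ξ n x)))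
      ≤ ∑' m : ℕ, ENNReal.ofReal (Real.exp (-(c * m))) * (G m n).indicator 1 x := by
    set m := ⌊walk ξ n x⌋₊
    have hxG : x ∈ G m n := ⟨fun k _ => hx0 k, (Nat.lt_floor_add_one _).le⟩
    refine le_trans ?_ (ENNReal.le_tsum m)
    rw [Set.indicator_of_mem hxG, Pi.one_apply, mul_one]
    gcongr
    exact Nat.floor_le (hx0 n)
  have hfin : ∑' n, ENNReal.ofReal (Real.exp (-(c * walk ξ n x))) ≠ ⊤ := by
    refine ne_top_of_le_ne_top hx.ne ((ENNReal.tsum_le_tsum hle).trans_eq ?_)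
    rw [ENNReal.tsum_comm]
    exact tsum_congr fun m => ENNReal.tsum_mul_left
  simpa only [ENNReal.toReal_ofReal (Real.exp_pos _).le] using ENNReal.summable_toReal hfin

lemma ae_eventually_lt_walk_of_nonneg (hpos : μ {e | 0 < ξ e} ≠ 0) (hℓ : Measurable ℓ)
    (hℓ0 : ∀ e, 0 < ℓ e) (htop : ∫⁻ e, ENNReal.ofReal (truncRatio μ ξ (ℓ e)) ∂μ ≠ ⊤) :
    ∀ᵐ x ∂iidLaw μ, (∀ k, 0 ≤ walk ξ k x) → ∀ᶠ n in atTop, ℓ (x n) < walk ξ n x := by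
  set G : ℕ → Set ((ℕ → E) × E) := fun n =>
    {z | (∀ k ≤ n, 0 ≤ walk ξ k z.1) ∧ walk ξ n z.1 ≤ ℓ z.2}
  have hG (n : ℕ) : MeasurableSet (G n) := by measurability
  have hGn (n : ℕ) (e : E) : DependsOn (fun x => (x, e) ∈ G n) (Set.Iio n) := fun x x' h => by
    have hk (k : ℕ) (hk : k ≤ n) : walk ξ k x = walk ξ k x' :=
      dependsOn_walk ξ k fun j hj => h j (lt_of_lt_of_le hj hk)
    simp +contextual only [G, Set.mem_ofPred_eq, hk, le_refl]
  have hsum : ∑' n, iidLaw μ {x | (x, x n) ∈ G n} ≠ ⊤ := by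
    simp_rw [measure_eval_of_dependsOn (μ := fun _ : ℕ => μ) Set.self_notMem_Iio (hG _) (hGn _)]
    have hmeas (n : ℕ) : Measurable fun e => iidLaw μ {x | (x, e) ∈ G n} :=
      measurable_measure_prodMk_right (hG n)
    rw [← lintegral_tsum fun n => (hmeas n).aemeasurable]
    refine ne_top_of_le_ne_top (ENNReal.mul_ne_top ENNReal.ofReal_ne_top htop) <|
      calc ∫⁻ e, ∑' n, iidLaw μ {x | (x, e) ∈ G n} ∂μ
          ≤ ∫⁻ e, ENNReal.ofReal (2 * truncRatio μ ξ (ℓ e)) ∂μ :=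
            lintegral_mono fun e => tsum_measure_walk_nonneg_le hξ hpos (hℓ0 e)
        _ = ENNReal.ofReal 2 * ∫⁻ e, ENNReal.ofReal (truncRatio μ ξ (ℓ e)) ∂μ := by
            simp_rw [ENNReal.ofReal_mul zero_le_two]
            exact lintegral_const_mul' _ _ ENNReal.ofReal_ne_top
  filter_upwards [ae_eventually_notMem hsum] with x hx hx0
  filter_upwards [hx] with n hn
  exact not_le.1 fun h => hn ⟨fun k _ => hx0 k, h⟩

lemma ae_summable_exp_sub_walk
    (hS : ∀ᵐ x ∂iidLaw μ, Tendsto (fun n => walk ξ n x) atTop atTop) (hℓ : Measurable ℓ)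
    (hℓ0 : ∀ e, 0 ≤ ℓ e) (htop : ∫⁻ e, ENNReal.ofReal (truncRatio μ ξ (ℓ e)) ∂μ ≠ ⊤) :
    ∀ᵐ x ∂iidLaw μ, Summable fun n => Real.exp (ℓ (x n) - walk ξ n x) := by
  have hpos := measure_pos_ne_zero_of_tendsto_walk hS
  have hint2 : ∫⁻ e, ENNReal.ofReal (truncRatio μ ξ (ℓ e + ℓ e + 1)) ∂μ ≠ ⊤ :=
    lintegral_truncRatio_add_ne_top hξ hpos (by fun_prop) (fun e => add_nonneg (hℓ0 e) (hℓ0 e))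
      (fun _ => zero_le_one) (lintegral_truncRatio_add_ne_top hξ hpos hℓ hℓ0 hℓ0 htop htop)
      (lintegral_truncRatio_ne_top_of_integrable hξ hpos (fun _ => zero_le_one)
        (integrable_const 1))
  have h : ∀ᵐ x ∂iidLaw μ, ∃ N, Summable (fun n => Real.exp (-(1 / 2 * walk ξ n (shift N x)))) ∧
      ∀ᶠ n in atTop, ℓ (shift N x n) + ℓ (shift N x n) + 1 < walk ξ n (shift N x) := by
    refine ae_exists_shift_of_walk_nonneg (p := fun x =>
      Summable (fun n => Real.exp (-(1 / 2 * walk ξ n x))) ∧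
        ∀ᶠ n in atTop, ℓ (x n) + ℓ (x n) + 1 < walk ξ n x) hS ?_
    filter_upwards [ae_summable_exp_neg_walk_of_nonneg hξ hpos one_half_pos,
      ae_eventually_lt_walk_of_nonneg hξ hpos (by fun_prop) (fun e => by linarith [hℓ0 e]) hint2]
      with x hsum hlt hx0 using ⟨hsum hx0, hlt hx0⟩
  filter_upwards [h] with x ⟨N, hsum, hlt⟩
  rw [← summable_nat_add_iff N]
  refine (hsum.mul_left (Real.exp (-walk ξ N x))).of_norm_bounded_eventually_nat ?_
  filter_upwards [hlt] with n hn
  rw [shift_apply] at hn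
  rw [Real.norm_of_nonneg (Real.exp_pos _).le, ← Real.exp_add, Real.exp_le_exp, add_comm n N,
    walk_add]
  linarith

end ExponentialFunctional

section BoundedWalk

variable {E : Type*} [MeasurableSpace E] {μ : Measure E} [IsProbabilityMeasure μ] {ξ w : E → ℝ}

lemma measure_inter_eval_preimage {n : ℕ} {G : Set (ℕ → E)} (hG : MeasurableSet G)
    (hGn : DependsOn (· ∈ G) (Set.Iio n)) {D : Set E} (hD : MeasurableSet D) :
    iidLaw μ (G ∩ {x | x n ∈ D}) = iidLaw μ G * μ D := by
  have hshift : {x : ℕ → E | x n ∈ D} = shift n ⁻¹' ((fun x => x 0) ⁻¹' D) := by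
    ext x
    simp
  rw [hshift, measure_inter_shift_preimage μ hG (measurable_pi_apply 0 hD) hGn,
    (measurePreserving_eval_infinitePi (fun _ => μ) 0).measure_preimage hD.nullMeasurableSet]

lemma measure_iUnion_mul_le {A : ℕ → Set (ℕ → E)} (hA : ∀ n, MeasurableSet (A n))
    (hAn : ∀ n, DependsOn (· ∈ A n) (Set.Iio n)) {D : Set E} (hD : MeasurableSet D) :
    iidLaw μ (⋃ n, A n) * μ D ≤ iidLaw μ (⋃ n, A n ∩ {x | x n ∈ D}) := by
  have hdep (n : ℕ) : DependsOn (· ∈ disjointed A n) (Set.Iio n) := fun x x' h => by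
    have hk (k : ℕ) (hk : k ≤ n) : (x ∈ A k) = (x' ∈ A k) :=
      hAn k fun j hj => h j (lt_of_lt_of_le hj hk)
    simp +contextual only [disjointed_eq_inter_compl, Set.mem_inter_iff, Set.mem_iInter,
      Set.mem_compl_iff, hk n le_rfl, hk _ (le_of_lt _)]
  have hAD (n : ℕ) : MeasurableSet (disjointed A n) := MeasurableSet.disjointed hA n
  have hDn (n : ℕ) : MeasurableSet {x : ℕ → E | x n ∈ D} := measurable_pi_apply n hD
  calc iidLaw μ (⋃ n, A n) * μ D
      = ∑' n, iidLaw μ (disjointed A n ∩ {x | x n ∈ D}) := by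
        rw [← iUnion_disjointed, measure_iUnion (disjoint_disjointed A) hAD,
          ← ENNReal.tsum_mul_right]
        exact tsum_congr fun n => (measure_inter_eval_preimage (hAD n) (hdep n) hD).symm
    _ = iidLaw μ (⋃ n, disjointed A n ∩ {x | x n ∈ D}) :=
        (measure_iUnion (fun _ _ h => (disjoint_disjointed A h).mono Set.inter_subset_left
          Set.inter_subset_left) fun n => (hAD n).inter (hDn n)).symm
    _ ≤ iidLaw μ (⋃ n, A n ∩ {x | x n ∈ D}) :=
        measure_mono <| Set.iUnion_mono fun n =>
          Set.inter_subset_inter_left _ (disjointed_subset A n)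

lemma measure_iInter_iUnion_mul_le {A : ℕ → ℕ → Set (ℕ → E)} (hA : ∀ m n, MeasurableSet (A m n))
    (hAn : ∀ m n, DependsOn (· ∈ A m n) (Set.Iio n)) (hanti : ∀ n, Antitone fun m => A m n)
    {D : Set E} (hD : MeasurableSet D) :
    iidLaw μ (⋂ m, ⋃ n, A m n) * μ D ≤ iidLaw μ (⋂ m, ⋃ n, A m n ∩ {x | x n ∈ D}) := by
  have hV (m : ℕ) : MeasurableSet (⋃ n, A m n ∩ {x | x n ∈ D}) :=
    MeasurableSet.iUnion fun n => (hA m n).inter (measurable_pi_apply n hD)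
  refine ge_of_tendsto' (tendsto_measure_iInter_atTop (fun m => (hV m).nullMeasurableSet)
    (fun m m' h => Set.iUnion_mono fun n => Set.inter_subset_inter_left _ (hanti n h))
    ⟨0, measure_ne_top _ _⟩) fun m => le_trans ?_ (measure_iUnion_mul_le (hA m) (hAn m) hD)
  gcongr
  exact Set.iInter_subset _ m

variable (hξ : Measurable ξ)

include hξ

lemma ae_bddBelow_walk (hw : Measurable w) (hwpos : μ {e | 0 < w e} ≠ 0)
    (hbd : ∀ᵐ x ∂iidLaw μ, BddAbove (Set.range fun n => Real.exp (-walk ξ n x) * w (x n))) :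
    ∀ᵐ x ∂iidLaw μ, BddBelow (Set.range fun n => walk ξ n x) := by
  obtain ⟨ε, hε, hμε⟩ := exists_pos_measure_lt_ne_zero hwpos
  set A : ℕ → ℕ → Set (ℕ → E) := fun m n => {x | walk ξ n x < -m}
  have hA (m n : ℕ) : MeasurableSet (A m n) :=
    measurableSet_lt (measurable_walk hξ n) measurable_const
  have hAn (m n : ℕ) : DependsOn (· ∈ A m n) (Set.Iio n) := fun x x' h => by
    simp only [A, Set.mem_ofPred_eq, dependsOn_walk ξ n h]
  have hanti (n : ℕ) : Antitone fun m => A m n := fun m m' h x (hx : walk ξ n x < -m') =>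
    hx.trans_le (neg_le_neg (Nat.cast_le.2 h))
  have hnull : iidLaw μ (⋂ m, ⋃ n, A m n ∩ {x | x n ∈ {e | ε < w e}}) = 0 := by
    rw [measure_eq_zero_iff_ae_notMem]
    filter_upwards [hbd] with x ⟨C, hC⟩ hx
    obtain ⟨m, hm⟩ := exists_nat_ge (C / ε)
    obtain ⟨n, hlow, hhigh⟩ := Set.mem_iUnion.1 (Set.mem_iInter.1 hx m)
    have hexp : (m : ℝ) < Real.exp (-walk ξ n x) :=
      (lt_neg_of_lt_neg hlow).trans_le ((lt_add_one _).le.trans (Real.add_one_le_exp _))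
    refine (hC ⟨n, rfl⟩).not_gt ?_
    calc C ≤ m * ε := (div_le_iff₀ hε).1 hm
      _ < Real.exp (-walk ξ n x) * ε := by gcongr
      _ ≤ Real.exp (-walk ξ n x) * w (x n) := by gcongr; exact le_of_lt hhigh
  have hD : MeasurableSet {e | ε < w e} := measurableSet_lt measurable_const hw
  have hle := measure_iInter_iUnion_mul_le (μ := μ) hA hAn hanti hD
  rw [hnull, nonpos_iff_eq_zero, mul_eq_zero, or_iff_left hμε] at hle
  filter_upwards [measure_eq_zero_iff_ae_notMem.1 hle] with x hx
  simp only [A, Set.mem_iInter, Set.mem_iUnion, Set.mem_ofPred_eq, not_forall, not_exists,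
    not_lt] at hx
  obtain ⟨m, hm⟩ := hx
  exact ⟨-m, Set.forall_mem_range.2 hm⟩

lemma ae_tendsto_walk_of_nonneg (hpos : μ {e | 0 < ξ e} ≠ 0) :
    ∀ᵐ x ∂iidLaw μ, (∀ k, 0 ≤ walk ξ k x) → Tendsto (fun n => walk ξ n x) atTop atTop := by
  filter_upwards [ae_summable_exp_neg_walk_of_nonneg hξ hpos one_pos] with x hx hx0
  simpa using Real.tendsto_exp_comp_nhds_zero.1 (hx hx0).tendsto_atTop_zero

lemma ae_tendsto_walk_of_neg_le (hpos : μ {e | 0 < ξ e} ≠ 0) (c : ℝ) :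
    ∀ᵐ x ∂iidLaw μ, (∀ k, -c ≤ walk ξ k x) → Tendsto (fun n => walk ξ n x) atTop atTop := by
  obtain ⟨δ, hδ, hμδ⟩ := exists_pos_measure_lt_ne_zero hpos
  obtain ⟨j, hj⟩ := exists_nat_ge (c / δ)
  -- The first `j` steps lift the walk above `c` with positive probability.
  set G : Set (ℕ → E) := Set.pi (Finset.range j) fun _ => {e | δ < ξ e}
  set H : Set (ℕ → E) :=
    {x | (∀ k, -c ≤ walk ξ k x) ∧ ¬ Tendsto (fun n => walk ξ n x) atTop atTop}
  have hD : MeasurableSet {e | δ < ξ e} := measurableSet_lt measurable_const hξ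
  have hG : MeasurableSet G := MeasurableSet.pi (Finset.countable_toSet _) fun _ _ => hD
  have hGpos : iidLaw μ G ≠ 0 := by
    rw [Measure.infinitePi_pi _ fun _ _ => hD]
    exact Finset.prod_ne_zero_iff.2 fun _ _ => hμδ
  have hGn : DependsOn (· ∈ G) (Set.Iio j) := fun x x' h => by
    simp +contextual only [G, Set.mem_pi, Finset.coe_range, h]
  have hH : MeasurableSet H := by
    have htendsto : MeasurableSet {x | Tendsto (fun n => walk ξ n x) atTop atTop} :=
      measurableSet_tendsto atTop (measurable_walk hξ)
    measurability
  have hnull : iidLaw μ (G ∩ shift j ⁻¹' H) = 0 := by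
    rw [measure_eq_zero_iff_ae_notMem]
    filter_upwards [ae_tendsto_walk_of_nonneg hξ hpos] with x hx ⟨hxG, hxc, hxt⟩
    have hx0 := walk_nonneg_of_shift hδ.le
      (fun i hi => (show δ < ξ (x i) from hxG i (Finset.mem_coe.2 (Finset.mem_range.2 hi))).le)
      ((div_le_iff₀ hδ).1 hj) hxc
    refine hxt ((tendsto_atTop_add_const_left _ (-walk ξ j x)
      ((tendsto_add_atTop_iff_nat j).2 (hx hx0))).congr fun n => ?_)
    rw [add_comm n j, walk_add, neg_add_cancel_left]
  rw [measure_inter_shift_preimage μ hG hH hGn, mul_eq_zero, or_iff_right hGpos,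
    measure_eq_zero_iff_ae_notMem] at hnull
  filter_upwards [hnull] with x hx hxc
  by_contra hxt
  exact hx ⟨hxc, hxt⟩

lemma ae_tendsto_walk_of_bddBelow (hne : μ {e | ξ e ≠ 0} ≠ 0)
    (hbd : ∀ᵐ x ∂iidLaw μ, BddBelow (Set.range fun n => walk ξ n x)) :
    ∀ᵐ x ∂iidLaw μ, Tendsto (fun n => walk ξ n x) atTop atTop := by
  suffices hpos : μ {e | 0 < ξ e} ≠ 0 by
    filter_upwards [hbd, ae_all_iff.2 fun c : ℕ => ae_tendsto_walk_of_neg_le hξ hpos c]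
      with x ⟨C, hC⟩ hx
    obtain ⟨c, hc⟩ := exists_nat_ge (-C)
    exact hx c fun k => (neg_le.1 hc).trans (hC ⟨k, rfl⟩)
  intro hpos
  have hneg : μ {e | 0 < (-ξ) e} ≠ 0 := fun hneg =>
    hne <| measure_mono_null (fun e he => (lt_or_gt_of_ne he).symm.imp id neg_pos.2)
      (measure_union_null hpos hneg)
  have hwalk (n : ℕ) (x : ℕ → E) : walk (-ξ) n x = -walk ξ n x := Finset.sum_neg_distrib _
  obtain ⟨x, htop, hξx, C, hC⟩ := ((ae_tendsto_walk_of_nonneg hξ.neg hneg).and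
    ((ae_all_eval μ (measure_eq_zero_iff_ae_notMem.1 hpos)).and hbd)).exists
  obtain ⟨n, hn⟩ := ((htop fun k => Finset.sum_nonneg fun i _ =>
    neg_nonneg.2 (not_lt.1 (hξx i))).eventually_gt_atTop (-C)).exists
  rw [hwalk, neg_lt_neg_iff] at hn
  exact hn.not_ge (hC ⟨n, rfl⟩)

end BoundedWalk

section Necessity

variable {E : Type*} [MeasurableSpace E] {μ : Measure E} {ξ ℓ : E → ℝ}

lemma truncMean_max_zero : truncMean μ (fun e => max (ξ e) 0) = truncMean μ ξ := by
  ext y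
  simp only [truncMean, le_max_right, max_eq_left]

variable [IsProbabilityMeasure μ] (hξ : Measurable ξ)

include hξ

/- The event that `n` is the last index with `ξ (x 0) + ⋯ + ξ (x (n - 1)) + b < ℓ (x n)` has at
least the probability of the product of the two events, and last indices are unique. -/
lemma tsum_measure_walk_add_lt_mul_le_one (hξ0 : ∀ e, 0 ≤ ξ e) (hℓ : Measurable ℓ) (b : ℝ) :
    (∑' n, iidLaw μ {x | walk ξ n x + b < ℓ (x n)}) *
      iidLaw μ {x | ∀ n, ℓ (x n) ≤ walk ξ n x + b} ≤ 1 := by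
  set F : ℕ → Set (ℕ → E) := fun n => {x | walk ξ n x + b < ℓ (x n)}
  set G : Set (ℕ → E) := {x | ∀ n, ℓ (x n) ≤ walk ξ n x + b}
  have hF (n : ℕ) : MeasurableSet (F n) :=
    measurableSet_lt ((measurable_walk hξ n).add_const b) (hℓ.comp (measurable_pi_apply n))
  have hG : MeasurableSet G := by
    simp only [G, Set.ofPred_forall]
    exact MeasurableSet.iInter fun n => measurableSet_le (hℓ.comp (measurable_pi_apply n))
      ((measurable_walk hξ n).add_const b)
  have hFn (n : ℕ) : DependsOn (· ∈ F n) (Set.Iio (n + 1)) := fun x x' h => by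
    simp only [F, Set.mem_ofPred_eq, h n (Set.mem_Iio.2 n.lt_succ_self),
      dependsOn_walk ξ n fun k hk => h k (lt_trans hk n.lt_succ_self)]
  have hlast (n i : ℕ) (x : ℕ → E) (hx : shift (n + 1) x ∈ G) : x ∉ F (n + 1 + i) := by
    have hwalk := walk_nonneg hξ0 (n + 1) x
    have hle := hx i
    rw [shift_apply] at hle
    simp only [F, Set.mem_ofPred_eq, walk_add ξ (n + 1) i, not_lt]
    linarith
  have hdisj : Pairwise (Function.onFun Disjoint fun n => F n ∩ shift (n + 1) ⁻¹' G) := by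
    refine (pairwise_disjoint_on _).2 fun n m hnm => ?_
    obtain ⟨i, rfl⟩ := Nat.exists_eq_add_of_le (Nat.succ_le_of_lt hnm)
    exact Set.disjoint_left.2 fun x hx hx' => hlast n i x hx.2 hx'.1
  calc (∑' n, iidLaw μ (F n)) * iidLaw μ G = ∑' n, iidLaw μ (F n ∩ shift (n + 1) ⁻¹' G) := by
        rw [← ENNReal.tsum_mul_right]
        exact tsum_congr fun n => (measure_inter_shift_preimage μ (hF n) hG (hFn n)).symm
    _ = iidLaw μ (⋃ n, F n ∩ shift (n + 1) ⁻¹' G) :=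
        (measure_iUnion hdisj fun n => (hF n).inter (measurable_shift _ hG)).symm
    _ ≤ 1 := prob_le_one

lemma exists_tsum_measure_walk_add_lt_ne_top (hξ0 : ∀ e, 0 ≤ ξ e) (hℓ : Measurable ℓ)
    (hbd : ∀ᵐ x ∂iidLaw μ, BddAbove (Set.range fun n => ℓ (x n) - walk ξ n x)) :
    ∃ b : ℕ, ∑' n, iidLaw μ {x | walk ξ n x + b < ℓ (x n)} ≠ ⊤ := by
  obtain ⟨b, hb⟩ : ∃ b : ℕ, iidLaw μ {x | ∀ n, ℓ (x n) ≤ walk ξ n x + b} ≠ 0 := by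
    by_contra! hnull
    obtain ⟨x, ⟨C, hC⟩, hx⟩ :=
      (hbd.and (measure_eq_zero_iff_ae_notMem.1 (measure_iUnion_null hnull))).exists
    obtain ⟨b, hCb⟩ := exists_nat_ge C
    exact hx (Set.mem_iUnion.2 ⟨b, fun n => sub_le_iff_le_add'.1 ((hC ⟨n, rfl⟩).trans hCb)⟩)
  refine ⟨b, fun htop => ?_⟩
  have hle := tsum_measure_walk_add_lt_mul_le_one (μ := μ) hξ hξ0 hℓ b
  rw [htop, ENNReal.top_mul hb] at hle
  exact ENNReal.one_ne_top (top_le_iff.1 hle)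

lemma lintegral_truncRatio_le_tsum_measure (hξ0 : ∀ e, 0 ≤ ξ e)
    (hS : ∀ᵐ x ∂iidLaw μ, Tendsto (fun n => walk ξ n x) atTop atTop) (hℓ : Measurable ℓ) (b : ℝ) :
    ∫⁻ e, ENNReal.ofReal (truncRatio μ ξ (max (ℓ e - b) 0)) ∂μ
      ≤ ∑' n, iidLaw μ {x | walk ξ n x + b < ℓ (x n)} := by
  have hH (n : ℕ) : MeasurableSet {z : (ℕ → E) × E | walk ξ n z.1 + b < ℓ z.2} :=
    measurableSet_lt (((measurable_walk hξ n).comp measurable_fst).add_const b)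
      (hℓ.comp measurable_snd)
  calc ∫⁻ e, ENNReal.ofReal (truncRatio μ ξ (max (ℓ e - b) 0)) ∂μ
      ≤ ∫⁻ e, ∑' n, iidLaw μ {x | walk ξ n x + b < ℓ e} ∂μ := by
        refine lintegral_mono fun e => ?_
        rcases le_or_gt (ℓ e) b with he | he
        · simp [max_eq_right (sub_nonpos.2 he), truncRatio]
        · rw [max_eq_left (sub_pos.2 he).le]
          simpa only [lt_sub_iff_add_lt] using
            truncRatio_le_tsum_measure_walk hξ hξ0 hS (sub_pos.2 he)
    _ = ∑' n, ∫⁻ e, iidLaw μ {x | walk ξ n x + b < ℓ e} ∂μ :=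
        lintegral_tsum fun n => (measurable_measure_prodMk_right (hH n)).aemeasurable
    _ = ∑' n, iidLaw μ {x | walk ξ n x + b < ℓ (x n)} := tsum_congr fun n =>
        (measure_eval_of_dependsOn (μ := fun _ : ℕ => μ) (i := n) Set.self_notMem_Iio (hH n)
          fun e x x' h => by simp only [Set.mem_ofPred_eq, dependsOn_walk ξ n h]).symm

lemma lintegral_truncRatio_ne_top_of_bddAbove
    (hS : ∀ᵐ x ∂iidLaw μ, Tendsto (fun n => walk ξ n x) atTop atTop) (hℓ : Measurable ℓ)
    (hℓ0 : ∀ e, 0 ≤ ℓ e)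
    (hbd : ∀ᵐ x ∂iidLaw μ, BddAbove (Set.range fun n => ℓ (x n) - walk ξ n x)) :
    ∫⁻ e, ENNReal.ofReal (truncRatio μ ξ (ℓ e)) ∂μ ≠ ⊤ := by
  have hpos := measure_pos_ne_zero_of_tendsto_walk hS
  have hξ' : Measurable fun e => max (ξ e) 0 := hξ.max measurable_const
  have hle (n : ℕ) (x : ℕ → E) : walk ξ n x ≤ walk (fun e => max (ξ e) 0) n x :=
    Finset.sum_le_sum fun _ _ => le_max_left _ _
  have hS' : ∀ᵐ x ∂iidLaw μ, Tendsto (fun n => walk (fun e => max (ξ e) 0) n x) atTop atTop :=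
    hS.mono fun x hx => tendsto_atTop_mono (fun n => hle n x) hx
  have hbd' : ∀ᵐ x ∂iidLaw μ,
      BddAbove (Set.range fun n => ℓ (x n) - walk (fun e => max (ξ e) 0) n x) :=
    hbd.mono fun x hx => hx.range_mono _ fun n => sub_le_sub_left (hle n x) _
  obtain ⟨b, hb⟩ := exists_tsum_measure_walk_add_lt_ne_top hξ' (fun _ => le_max_right _ _) hℓ hbd'
  have hexcess := ne_top_of_le_ne_top hb
    (lintegral_truncRatio_le_tsum_measure hξ' (fun _ => le_max_right _ _) hS' hℓ b)
  simp only [truncRatio, truncMean_max_zero] at hexcess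
  have hmin : Integrable (fun e => min (ℓ e) b) μ :=
    (integrable_const (b : ℝ)).mono' (by fun_prop) (Eventually.of_forall fun e => by
      rw [Real.norm_of_nonneg (le_min (hℓ0 e) b.cast_nonneg)]
      exact min_le_right _ _)
  have hsplit (e : E) : max (ℓ e - b) 0 + min (ℓ e) b = ℓ e := by
    rcases le_total (ℓ e) b with h | h <;> simp [h]
  have hmin0 (e : E) : 0 ≤ min (ℓ e) b := le_min (hℓ0 e) b.cast_nonneg
  have hsum := lintegral_truncRatio_add_ne_top hξ hpos (f := fun e => max (ℓ e - b) 0)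
    (by fun_prop) (fun _ => le_max_right _ _) hmin0 hexcess
    (lintegral_truncRatio_ne_top_of_integrable hξ hpos hmin0 hmin)
  simpa only [hsplit] using hsum

end Necessity

section Dichotomy

lemma logplus_nonneg (x : ℝ) : 0 ≤ logplus x := le_max_right _ _

lemma measurable_logplus : Measurable logplus := Real.measurable_log.max measurable_const

lemma le_exp_logplus (x : ℝ) : x ≤ Real.exp (logplus x) :=
  (Real.le_exp_log x).trans (Real.exp_le_exp.2 (le_max_left _ _))

lemma logplus_sub_le {x : ℝ} (hx : 0 ≤ x) (a : ℝ) :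
    logplus x - a ≤ max (Real.exp (-a) * x) (-a) := by
  rcases hx.eq_or_lt with rfl | hx
  · simp [logplus]
  rw [logplus, ← max_sub_sub_right, zero_sub]
  refine max_le_max_right _ ?_
  calc Real.log x - a = Real.log (Real.exp (-a) * x) := by
        rw [Real.log_mul (Real.exp_ne_zero _) hx.ne', Real.log_exp, neg_add_eq_sub]
    _ ≤ Real.exp (-a) * x := Real.log_le_self (by positivity)

variable {E : Type*} [MeasurableSpace E] {μ : Measure E} [IsProbabilityMeasure μ] {ξ w t : E → ℝ}
  (hξ : Measurable ξ)

include hξ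

theorem ae_tendsto_walk_and_lintegral_ne_top_of_bddAbove (hne : μ {e | ξ e ≠ 0} ≠ 0)
    (hw : Measurable w) (hw0 : ∀ e, 0 ≤ w e) (hwpos : μ {e | 0 < w e} ≠ 0)
    (hbd : ∀ᵐ x ∂iidLaw μ, BddAbove (Set.range fun n => Real.exp (-walk ξ n x) * w (x n))) :
    (∀ᵐ x ∂iidLaw μ, Tendsto (fun n => walk ξ n x) atTop atTop) ∧
      ∫⁻ e, ENNReal.ofReal (truncRatio μ ξ (logplus (w e))) ∂μ ≠ ⊤ := by
  have hbelow := ae_bddBelow_walk hξ hw hwpos hbd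
  have hS := ae_tendsto_walk_of_bddBelow hξ hne hbelow
  refine ⟨hS, lintegral_truncRatio_ne_top_of_bddAbove hξ hS (measurable_logplus.comp hw)
    (fun _ => logplus_nonneg _) ?_⟩
  filter_upwards [hbelow, hbd] with x ⟨c, hc⟩ ⟨C, hC⟩
  exact ⟨max C (-c), Set.forall_mem_range.2 fun n => (logplus_sub_le (hw0 _) _).trans
    (max_le_max (hC ⟨n, rfl⟩) (neg_le_neg (hc ⟨n, rfl⟩)))⟩

theorem ae_summable_exp_neg_walk_mul
    (hS : ∀ᵐ x ∂iidLaw μ, Tendsto (fun n => walk ξ n x) atTop atTop) (hw : Measurable w)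
    (hw0 : ∀ e, 0 ≤ w e) (htop : ∫⁻ e, ENNReal.ofReal (truncRatio μ ξ (logplus (w e))) ∂μ ≠ ⊤)
    (ht : Measurable t) (ht0 : ∀ e, 0 ≤ t e) (htint : Integrable t μ) :
    ∀ᵐ x ∂iidLaw μ, Summable fun n => Real.exp (-walk ξ n x) * (t (x n) * w (x n)) := by
  have hpos := measure_pos_ne_zero_of_tendsto_walk hS
  filter_upwards [ae_summable_exp_sub_walk hξ hS (ℓ := fun e => logplus (w e) + t e)
    ((measurable_logplus.comp hw).add ht) (fun e => add_nonneg (logplus_nonneg _) (ht0 e))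
    (lintegral_truncRatio_add_ne_top hξ hpos (measurable_logplus.comp hw)
      (fun _ => logplus_nonneg _) ht0 htop
      (lintegral_truncRatio_ne_top_of_integrable hξ hpos ht0 htint))] with x hx
  refine hx.of_nonneg_of_le (fun n => mul_nonneg (Real.exp_pos _).le
    (mul_nonneg (ht0 _) (hw0 _))) fun n => ?_
  calc Real.exp (-walk ξ n x) * (t (x n) * w (x n))
      ≤ Real.exp (-walk ξ n x) * (Real.exp (t (x n)) * Real.exp (logplus (w (x n)))) := by
        gcongr
        · exact hw0 _
        · exact (le_add_of_nonneg_right zero_le_one).trans (Real.add_one_le_exp _)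
        · exact le_exp_logplus _
    _ = Real.exp (logplus (w (x n)) + t (x n) - walk ξ n x) := by
        rw [← Real.exp_add, ← Real.exp_add]
        ring_nf

end Dichotomy

section Splice

variable {E : Type*}

/-- The first `n` terms of `z.1` followed by all terms of `z.2`. -/
def splice (n : ℕ) (z : (ℕ → E) × (ℕ → E)) : ℕ → E :=
  fun k => if k < n then z.1 k else z.2 (k - n)

lemma splice_of_lt {n k : ℕ} (hk : k < n) (z : (ℕ → E) × (ℕ → E)) : splice n z k = z.1 k :=
  if_pos hk

@[simp]
lemma shift_splice (n : ℕ) (z : (ℕ → E) × (ℕ → E)) : shift n (splice n z) = z.2 := by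
  ext k
  simp [splice]

lemma measurable_splice [MeasurableSpace E] (n : ℕ) :
    Measurable (splice n : (ℕ → E) × (ℕ → E) → ℕ → E) :=
  measurable_pi_lambda _ fun k => by
    unfold splice
    split_ifs <;> fun_prop

end Splice

section MarkovPaths

variable {S F : Type*}

/-- The paths of length `N` of a marked chain that follow the states `s 0, …, s N` and whose first
`N` marks lie in `C 0, …, C (N - 1)`. The `k`-th term of a path consists of the `k`-th state and
the mark of the transition from there to the next state. -/
def cylinder (N : ℕ) (s : ℕ → S) (C : ℕ → Set F) : Set (ℕ → S × F) :=
  {y | (∀ k < N, y k ∈ {s k} ×ˢ C k) ∧ (y N).1 = s N}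

lemma fst_eq_of_mem_cylinder {N k : ℕ} (hk : k ≤ N) {s : ℕ → S} {C : ℕ → Set F} {y : ℕ → S × F}
    (hy : y ∈ cylinder N s C) : (y k).1 = s k := by
  rcases hk.lt_or_eq with hk | rfl
  · exact (hy.1 k hk).1
  · exact hy.2

lemma cylinder_add (n m : ℕ) (s : ℕ → S) (C : ℕ → Set F) :
    cylinder (n + m) s C
      = (Set.Iio n).pi (fun k => {s k} ×ˢ C k) ∩
        shift n ⁻¹' cylinder m (shift n s) (shift n C) := by
  ext y
  simp only [cylinder, Set.mem_inter_iff, Set.mem_pi, Set.mem_Iio, Set.mem_preimage,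
    Set.mem_ofPred_eq, shift_apply, ← and_assoc, and_congr_left_iff]
  refine fun _ => ⟨fun h => ⟨fun k hk => h k (by lia), fun k hk => h (n + k) (by lia)⟩, ?_⟩
  rintro ⟨hlt, hge⟩ k hk
  rcases lt_or_ge k n with hkn | hkn
  · exact hlt k hkn
  · obtain ⟨i, rfl⟩ := Nat.exists_eq_add_of_le hkn
    exact hge i (by lia)

lemma setOf_mem_prod_eq_iUnion_cylinder {N k : ℕ} (hk : k < N) (a : S) (C : Set F) :
    {y : ℕ → S × F | y k ∈ {a} ×ˢ C}
      = ⋃ (f : Fin (N + 1) → S) (_ : f (Fin.ofNat _ k) = a),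
        cylinder N (fun l => f (Fin.ofNat _ l)) (fun l => if l = k then C else Set.univ) := by
  have hmod {l : ℕ} (hl : l ≤ N) : l % (N + 1) = l := Nat.mod_eq_of_lt (Nat.lt_succ_of_le hl)
  ext y
  simp only [cylinder, Set.mem_iUnion, Set.mem_ofPred_eq, exists_prop]
  constructor
  · refine fun hy => ⟨fun l => (y l).1, ?_, fun l hl => ⟨?_, ?_⟩, ?_⟩
    · simpa only [Fin.val_ofNat, hmod hk.le, Set.mem_singleton_iff] using hy.1
    · simp only [Fin.val_ofNat, hmod hl.le, Set.mem_singleton_iff]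
    · split_ifs with hlk
      exacts [hlk ▸ hy.2, trivial]
    · simp only [Fin.val_ofNat, hmod le_rfl]
  · rintro ⟨f, hf, hy, -⟩
    simpa only [if_true, hf] using hy k hk

variable (S F) in
/-- The cylinders that determine at least the first `n` transitions. -/
def cylinders [MeasurableSpace F] (n : ℕ) : Set (Set (ℕ → S × F)) :=
  {D | ∃ m s C, (∀ k, MeasurableSet (C k)) ∧ D = cylinder (n + m) s C}

variable [MeasurableSpace F]

lemma isPiSystem_cylinders (n : ℕ) : IsPiSystem (cylinders S F n) := by
  have hinter {N N' : ℕ} (hN : N ≤ N') {s s' : ℕ → S} {C C' : ℕ → Set F} {y : ℕ → S × F}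
      (hy : y ∈ cylinder N s C) (hy' : y ∈ cylinder N' s' C') :
      cylinder N s C ∩ cylinder N' s' C'
        = cylinder N' s' fun k => if k < N then C k ∩ C' k else C' k := by
    have hs (k : ℕ) (hk : k ≤ N) : s k = s' k :=
      (fst_eq_of_mem_cylinder hk hy).symm.trans (fst_eq_of_mem_cylinder (hk.trans hN) hy')
    ext z
    simp only [cylinder, Set.mem_inter_iff, Set.mem_ofPred_eq, Set.mem_prod,
      Set.mem_singleton_iff]
    constructor
    · grind
    · grind
  rintro _ ⟨m, s, C, hC, rfl⟩ _ ⟨m', s', C', hC', rfl⟩ ⟨y, hy, hy'⟩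
  wlog h : m ≤ m' generalizing m m' s s' C C'
  · rw [Set.inter_comm]
    exact this m' s' C' hC' m s C hC hy' hy (le_of_not_ge h)
  refine ⟨m', s', _, fun k => ?_, hinter (by lia) hy hy'⟩
  split_ifs
  exacts [(hC k).inter (hC' k), hC' k]

variable [MeasurableSpace S]

/-- A family `Q` of path laws is Markov if the path from time `n` onwards, given the state `j` at
time `n`, is independent of the first `n` terms of the path and has law `Q j`. -/
def IsMarkov (Q : S → Measure (ℕ → S × F)) : Prop :=
  ∀ (i j : S) (n : ℕ) (G H : Set (ℕ → S × F)), MeasurableSet G → MeasurableSet H →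
    DependsOn (· ∈ G) (Set.Iio n) →
    Q i (G ∩ {y | (y n).1 = j} ∩ shift n ⁻¹' H) = Q i (G ∩ {y | (y n).1 = j}) * Q j H

/-- `Q i` is the law of the path of a marked chain started at `i` which moves from `a` to `b` with
probability `p a b` and then draws the mark of this transition from `K a b`. -/
structure HasTransitions (Q : S → Measure (ℕ → S × F)) (p : S → S → ℝ≥0∞)
    (K : S → S → Measure F) : Prop where
  start : ∀ i N s C, s 0 ≠ i → Q i (cylinder N s C) = 0
  cylinder : ∀ N s C, (∀ k, MeasurableSet (C k)) → Q (s 0) (cylinder N s C)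
    = ∏ k ∈ Finset.range N, (p (s k) (s (k + 1)) * K (s k) (s (k + 1)) (C k))

variable {Q : S → Measure (ℕ → S × F)} {p : S → S → ℝ≥0∞} {K : S → S → Measure F}

lemma measure_cylinder_add (h : HasTransitions Q p K) (i : S) (n m : ℕ)
    (s : ℕ → S) {C : ℕ → Set F} (hC : ∀ k, MeasurableSet (C k)) :
    Q i (cylinder (n + m) s C)
      = Q i (cylinder n s C) * Q (s n) (cylinder m (shift n s) (shift n C)) := by
  by_cases hi : s 0 = i
  · subst hi
    rw [h.cylinder _ _ _ hC, h.cylinder _ _ _ hC, Finset.prod_range_add]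
    exact congrArg _ (h.cylinder m (shift n s) (shift n C) fun k => hC _).symm
  · rw [h.start i _ _ _ hi, h.start i _ _ _ hi, zero_mul]

variable [MeasurableSingletonClass S]

lemma measurableSet_fst_eq (n : ℕ) (i : S) : MeasurableSet {y : ℕ → S × F | (y n).1 = i} :=
  (measurable_fst.comp (measurable_pi_apply n)) (measurableSet_singleton i)

lemma measurableSet_cylinder (N : ℕ) (s : ℕ → S) {C : ℕ → Set F} (hC : ∀ k, MeasurableSet (C k)) :
    MeasurableSet (cylinder N s C) :=
  (MeasurableSet.pi (Set.to_countable (Set.Iio N)) fun k _ =>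
    (measurableSet_singleton (s k)).prod (hC k)).inter (measurableSet_fst_eq N (s N))

lemma generateFrom_cylinders [Countable S] (n : ℕ) :
    (MeasurableSpace.pi : MeasurableSpace (ℕ → S × F))
      = MeasurableSpace.generateFrom (cylinders S F n) := by
  refine le_antisymm ?_ (MeasurableSpace.generateFrom_le ?_)
  swap
  · rintro _ ⟨m, s, C, hC, rfl⟩
    exact measurableSet_cylinder _ s hC
  have hgen (k : ℕ) (a : S) {C : Set F} (hC : MeasurableSet C) :
      MeasurableSet[MeasurableSpace.generateFrom (cylinders S F n)] {y | y k ∈ {a} ×ˢ C} := by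
    rw [setOf_mem_prod_eq_iUnion_cylinder (show k < n + (k + 1) by lia) a C]
    refine MeasurableSet.iUnion fun f => MeasurableSet.iUnion fun _ =>
      MeasurableSpace.measurableSet_generateFrom ⟨k + 1, _, _, fun l => ?_, rfl⟩
    split_ifs
    exacts [hC, MeasurableSet.univ]
  refine iSup_le fun k => ?_
  rintro _ ⟨D, hD, rfl⟩
  have hslices : (fun y : ℕ → S × F => y k) ⁻¹' D = ⋃ a, {y | y k ∈ {a} ×ˢ (Prod.mk a ⁻¹' D)} := by
    ext y
    simp
  rw [hslices]
  exact MeasurableSet.iUnion fun a => hgen k a (measurable_prodMk_left hD)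

variable [Countable S] [∀ i, IsProbabilityMeasure (Q i)]

lemma restrict_eq_map_splice (h : HasTransitions Q p K) (i j : S) (n : ℕ) :
    (Q i).restrict {y | (y n).1 = j}
      = (((Q i).restrict {y | (y n).1 = j}).prod (Q j)).map (splice n) := by
  have hj : MeasurableSet {y : ℕ → S × F | (y n).1 = j} := measurableSet_fst_eq n j
  have : IsFiniteMeasure ((((Q i).restrict {y | (y n).1 = j}).prod (Q j)).map (splice n)) :=
    inferInstance
  refine ext_of_generate_finite _ (generateFrom_cylinders n) (isPiSystem_cylinders n) ?_ ?_
  · rintro _ ⟨m, s, C, hC, rfl⟩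
    have hpre : splice n ⁻¹' cylinder (n + m) s C
        = (Set.Iio n).pi (fun k => {s k} ×ˢ C k) ×ˢ cylinder m (shift n s) (shift n C) := by
      ext z
      simp +contextual only [cylinder_add, Set.mem_preimage, Set.mem_inter_iff, Set.mem_pi,
        Set.mem_Iio, splice_of_lt, shift_splice, Set.mem_prod]
    rw [Measure.map_apply (measurable_splice n) (measurableSet_cylinder _ s hC), hpre,
      Measure.prod_prod, Measure.restrict_apply' hj, Measure.restrict_apply' hj]
    by_cases hs : s n = j
    · have hinit : (Set.Iio n).pi (fun k => {s k} ×ˢ C k) ∩ {y | (y n).1 = j} = cylinder n s C := by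
        rw [← hs]
        rfl
      have hsub : cylinder (n + m) s C ⊆ {y | (y n).1 = j} := fun y hy =>
        (fst_eq_of_mem_cylinder (Nat.le_add_right n m) hy).trans hs
      rw [hinit, Set.inter_eq_left.2 hsub, ← hs, measure_cylinder_add h i n m s hC]
    · have hempty : cylinder (n + m) s C ∩ {y | (y n).1 = j} = ∅ :=
        Set.eq_empty_of_forall_notMem fun y hy =>
          hs ((fst_eq_of_mem_cylinder (Nat.le_add_right n m) hy.1).symm.trans hy.2)
      rw [hempty, measure_empty, h.start j m (shift n s) _ (by simpa using hs), mul_zero]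
  · rw [Measure.map_apply (measurable_splice n) MeasurableSet.univ, Set.preimage_univ,
      ← Set.univ_prod_univ, Measure.prod_prod, measure_univ (μ := Q j), mul_one]

theorem HasTransitions.isMarkov (h : HasTransitions Q p K) : IsMarkov Q := by
  intro i j n G H hG hH hGn
  have hGH : MeasurableSet (G ∩ shift n ⁻¹' H) := hG.inter (measurable_shift n hH)
  have hpre : splice n ⁻¹' (G ∩ shift n ⁻¹' H) = G ×ˢ H := by
    ext z
    have hGz : splice n z ∈ G ↔ z.1 ∈ G := iff_of_eq (hGn fun k hk => splice_of_lt hk z)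
    simp only [Set.mem_preimage, Set.mem_inter_iff, hGz, shift_splice, Set.mem_prod]
  rw [Set.inter_right_comm, ← Measure.restrict_apply hGH, restrict_eq_map_splice h,
    Measure.map_apply (measurable_splice n) hGH, hpre, Measure.prod_prod, Measure.restrict_apply hG]

end MarkovPaths

section IterateIndependent

variable {X E : Type*} [MeasurableSpace X] [MeasurableSpace E] {μ : Measure X}
  [IsProbabilityMeasure μ] {T : X → X} {g : X → E}

lemma measure_forall_lt_iterate_mem (hT : MeasurePreserving T μ μ) (hg : Measurable g)
    (hind : IndepFun g T μ) (N : ℕ) (D : ℕ → Set E) (hD : ∀ k, MeasurableSet (D k)) :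
    μ {x | ∀ k < N, g (T^[k] x) ∈ D k} = ∏ k ∈ Finset.range N, μ.map g (D k) := by
  induction N generalizing D with
  | zero => simp
  | succ N ih =>
    have hsplit : {x | ∀ k < N + 1, g (T^[k] x) ∈ D k}
        = g ⁻¹' D 0 ∩ T ⁻¹' {x | ∀ k < N, g (T^[k] x) ∈ D (k + 1)} := by
      ext x
      simp only [Set.mem_ofPred_eq, Nat.forall_lt_succ_left', Set.mem_inter_iff, Set.mem_preimage,
        Function.iterate_zero_apply, Function.iterate_succ_apply]
    have hmeas : MeasurableSet {x | ∀ k < N, g (T^[k] x) ∈ D (k + 1)} := by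
      simp only [Set.ofPred_forall]
      exact MeasurableSet.iInter fun k => MeasurableSet.iInter fun _ =>
        (hg.comp (hT.measurable.iterate k)) (hD _)
    rw [hsplit, hind.measure_inter_preimage_eq_mul _ _ (hD 0) hmeas,
      hT.measure_preimage hmeas.nullMeasurableSet, ih _ fun k => hD _, Finset.prod_range_succ',
      mul_comm, Measure.map_apply hg (hD 0)]

lemma map_iterate_eq_iidLaw (hT : MeasurePreserving T μ μ) (hg : Measurable g)
    (hind : IndepFun g T μ) : μ.map (fun x n => g (T^[n] x)) = iidLaw (μ.map g) := by
  have : IsProbabilityMeasure (μ.map g) := Measure.isProbabilityMeasure_map hg.aemeasurable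
  refine Measure.eq_infinitePi _ fun s D hD => ?_
  have hmeas : Measurable fun x n => g (T^[n] x) :=
    measurable_pi_lambda _ fun n => hg.comp (hT.measurable.iterate n)
  have hs : s ⊆ Finset.range (s.sup id + 1) := fun k hk =>
    Finset.mem_range.2 (Nat.lt_succ_of_le (Finset.le_sup (f := id) hk))
  have hpre : (fun x n => g (T^[n] x)) ⁻¹' Set.pi s D
      = {x | ∀ k < s.sup id + 1, g (T^[k] x) ∈ if k ∈ s then D k else Set.univ} := by
    ext x
    refine ⟨fun h k _ => ?_, fun h k hk => ?_⟩
    · split_ifs with hk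
      exacts [h k hk, trivial]
    · simpa only [if_pos (Finset.mem_coe.1 hk)] using h k (Finset.mem_range.1 (hs hk))
  rw [Measure.map_apply hmeas (MeasurableSet.pi s.countable_toSet fun k _ => hD k), hpre,
    measure_forall_lt_iterate_mem hT hg hind]
  · simp only [apply_ite, measure_univ, Finset.prod_ite_mem, Finset.inter_eq_right.2 hs]
  · intro k
    split_ifs
    exacts [hD k, MeasurableSet.univ]

end IterateIndependent

section FirstIndex

lemma measurable_sInf_setOf {α : Type*} [MeasurableSpace α] {p : ℕ → α → Prop}
    (hp : ∀ k, MeasurableSet {x | p k x}) : Measurable fun x => sInf {k | p k x} := by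
  refine measurable_of_Iic fun n => ?_
  have hpre : (fun x => sInf {k | p k x}) ⁻¹' Set.Iic n
      = (⋃ k ≤ n, {x | p k x}) ∪ (⋃ k, {x | p k x})ᶜ := by
    ext x
    simp only [Set.mem_preimage, Set.mem_Iic, Set.mem_union, Set.mem_iUnion, Set.mem_ofPred_eq,
      Set.mem_compl_iff, exists_prop]
    constructor
    · exact fun hn => or_iff_not_imp_right.2 fun hx =>
        ⟨_, hn, Nat.sInf_mem (s := {k | p k x}) (not_not.1 hx)⟩
    · rintro (⟨k, hk, hx⟩ | hx)
      · exact (Nat.sInf_le hx).trans hk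
      · exact (Nat.sInf_eq_zero.2 (.inr (Set.eq_empty_of_forall_notMem fun k hk =>
          hx ⟨k, hk⟩))).trans_le n.zero_le
  rw [hpre]
  exact (MeasurableSet.iUnion fun k => .iUnion fun _ => hp k).union
    (MeasurableSet.iUnion hp).compl

end FirstIndex

section Returns

variable {S F : Type*}

/-- The paths that visit the state `i` at a positive time. -/
def hits (i : S) : Set (ℕ → S × F) := {y | ∃ k, 0 < k ∧ (y k).1 = i}

/-- The first positive time at which a path visits `i`, and `0` if there is none. -/
def returnTime (i : S) (y : ℕ → S × F) : ℕ := sInf {k | 0 < k ∧ (y k).1 = i}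

/-- The path seen from its first return to `i`. -/
def afterReturn (i : S) (y : ℕ → S × F) : ℕ → S × F := shift (returnTime i y) y

/-- The paths for which `n` is a possible first return time to `i` in view of the states before
time `n`. -/
def noReturnBefore (i : S) (n : ℕ) : Set (ℕ → S × F) :=
  {y | 0 < n ∧ ∀ k < n, 0 < k → (y k).1 ≠ i}

lemma returnTime_spec {i : S} {y : ℕ → S × F} (hy : y ∈ hits i) :
    0 < returnTime i y ∧ (y (returnTime i y)).1 = i :=
  Nat.sInf_mem (s := {k | 0 < k ∧ (y k).1 = i}) hy

lemma mem_hits_and_returnTime_eq_iff {i : S} {n : ℕ} {y : ℕ → S × F} :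
    y ∈ hits i ∧ returnTime i y = n ↔ y ∈ noReturnBefore i n ∧ (y n).1 = i := by
  constructor
  · rintro ⟨hy, rfl⟩
    obtain ⟨hpos, hi⟩ := returnTime_spec hy
    exact ⟨⟨hpos, fun k hk h0 hc => Nat.notMem_of_lt_sInf hk ⟨h0, hc⟩⟩, hi⟩
  · rintro ⟨⟨hn, hbefore⟩, hi⟩
    have hy : y ∈ hits i := ⟨n, hn, hi⟩
    refine ⟨hy, (Nat.sInf_le ⟨hn, hi⟩ : returnTime i y ≤ n).eq_of_not_lt fun hlt => ?_⟩
    exact hbefore _ hlt (returnTime_spec hy).1 (returnTime_spec hy).2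

lemma dependsOn_noReturnBefore (i : S) (n : ℕ) :
    DependsOn (· ∈ (noReturnBefore i n : Set (ℕ → S × F))) (Set.Iio n) := by
  intro y z hyz
  simp +contextual only [noReturnBefore, Set.mem_ofPred_eq, hyz _ (Set.mem_Iio.2 _)]

lemma shift_mem_hits {i : S} {y : ℕ → S × F} (hy : ∀ n, (afterReturn i)^[n] y ∈ hits i) (n : ℕ) :
    shift n y ∈ hits i := by
  induction n using Nat.strong_induction_on generalizing y with
  | _ n ih =>
    obtain ⟨hpos, hi⟩ : 0 < returnTime i y ∧ (y (returnTime i y)).1 = i := returnTime_spec (hy 0)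
    rcases lt_or_ge n (returnTime i y) with hlt | hge
    · exact ⟨returnTime i y - n, by lia, by rwa [shift_apply, Nat.add_sub_cancel' hlt.le]⟩
    · have := ih (n - returnTime i y) (by lia) (y := afterReturn i y) fun m => hy (m + 1)
      rwa [afterReturn, shift_shift, Nat.add_sub_cancel' hge] at this

/-- The time of the `n`-th visit of a path to `i` after time `0`, provided there are that many. -/
def nthReturn (i : S) : ℕ → (ℕ → S × F) → ℕ
  | 0 => fun _ => 0
  | n + 1 => fun y => sInf {k | nthReturn i n y < k ∧ (y k).1 = i}

lemma nthReturn_succ {i : S} {y : ℕ → S × F} {n : ℕ} (hy : shift (nthReturn i n y) y ∈ hits i) :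
    nthReturn i (n + 1) y = nthReturn i n y + returnTime i (shift (nthReturn i n y) y) := by
  obtain ⟨hpos, hi⟩ := returnTime_spec hy
  have hmem : nthReturn i n y + returnTime i (shift (nthReturn i n y) y)
      ∈ {k | nthReturn i n y < k ∧ (y k).1 = i} := ⟨by lia, hi⟩
  refine le_antisymm (Nat.sInf_le hmem) (le_csInf ⟨_, hmem⟩ ?_)
  rintro k ⟨hlt, hk⟩
  obtain ⟨m, rfl⟩ := Nat.exists_eq_add_of_lt hlt
  have hm : returnTime i (shift (nthReturn i n y) y) ≤ m + 1 := Nat.sInf_le ⟨m.succ_pos, hk⟩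
  lia

section

variable {i : S} {y : ℕ → S × F} (hy : ∀ n, shift n y ∈ hits i)
include hy

lemma strictMono_nthReturn : StrictMono fun n => nthReturn i n y :=
  strictMono_nat_of_lt_succ fun n => by
    rw [nthReturn_succ (hy _)]
    exact Nat.lt_add_of_pos_right (returnTime_spec (hy _)).1

lemma iterate_afterReturn (n : ℕ) : (afterReturn i)^[n] y = shift (nthReturn i n y) y := by
  induction n with
  | zero =>
    ext1 k
    simp only [Function.iterate_zero_apply, nthReturn, shift_apply, zero_add]
  | succ n ih =>
    rw [Function.iterate_succ_apply', ih, afterReturn, shift_shift, nthReturn_succ (hy _)]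

lemma nthReturn_succ' (n : ℕ) :
    nthReturn i (n + 1) y = returnTime i y + nthReturn i n (afterReturn i y) := by
  have hy' (m : ℕ) : shift m (afterReturn i y) ∈ hits i := by
    rw [afterReturn, shift_shift]
    exact hy _
  induction n with
  | zero => rfl
  | succ n ih =>
    rw [nthReturn_succ (hy _), nthReturn_succ (hy' _), ← iterate_afterReturn hy,
      ← iterate_afterReturn hy', ← Function.iterate_succ_apply, ih, add_assoc]

end

variable [MeasurableSpace S] [MeasurableSingletonClass S] [MeasurableSpace F]

lemma measurableSet_hits (i : S) : MeasurableSet (hits i : Set (ℕ → S × F)) := by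
  simp only [hits, Set.ofPred_exists]
  exact .iUnion fun n => (MeasurableSet.const _).inter (measurableSet_fst_eq n i)

lemma measurableSet_noReturnBefore (i : S) (n : ℕ) :
    MeasurableSet (noReturnBefore i n : Set (ℕ → S × F)) := by
  simp only [noReturnBefore, Set.ofPred_and, Set.ofPred_forall]
  exact (MeasurableSet.const _).inter <| .iInter fun k => .iInter fun _ => .iInter fun _ =>
    (measurableSet_fst_eq k i).compl

lemma measurable_returnTime (i : S) : Measurable (returnTime i : (ℕ → S × F) → ℕ) :=
  measurable_sInf_setOf fun k => (MeasurableSet.const _).inter (measurableSet_fst_eq k i)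

lemma measurable_nthReturn (i : S) (n : ℕ) : Measurable (nthReturn i n : (ℕ → S × F) → ℕ) := by
  induction n with
  | zero => exact measurable_const
  | succ n ih =>
    exact measurable_sInf_setOf fun k =>
      (measurableSet_lt ih measurable_const).inter (measurableSet_fst_eq k i)

lemma measurable_returnTime_apply {E : Type*} [MeasurableSpace E] (i : S)
    {f : ℕ → (ℕ → S × F) → E} (hf : ∀ n, Measurable (f n)) :
    Measurable fun y => f (returnTime i y) y :=
  (measurable_from_prod_countable_right (f := fun z : ℕ × (ℕ → S × F) => f z.1 z.2) hf).comp
    ((measurable_returnTime i).prodMk measurable_id)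

lemma measurable_afterReturn (i : S) :
    Measurable (afterReturn i : (ℕ → S × F) → ℕ → S × F) :=
  measurable_returnTime_apply i measurable_shift

end Returns

section StrongMarkov

variable {S F E : Type*} [MeasurableSpace S] [MeasurableSpace F]

/-- The path laws of an irreducible recurrent marked Markov chain. -/
structure IsRecurrentMarkov (Q : S → Measure (ℕ → S × F)) : Prop where
  isProbabilityMeasure : ∀ i, IsProbabilityMeasure (Q i)
  isMarkov : IsMarkov Q
  irreducible : ∀ i j, ∃ n, Q i {y | (y n).1 = j} ≠ 0
  ae_mem_hits_self : ∀ i, ∀ᵐ y ∂Q i, y ∈ hits i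

variable {Q : S → Measure (ℕ → S × F)}

namespace IsRecurrentMarkov

lemma ae_of_ae_all_shift (hQ : IsRecurrentMarkov Q) {q : (ℕ → S × F) → Prop}
    (hq : MeasurableSet {y | q y}) {i : S} (h : ∀ᵐ y ∂Q i, ∀ n, q (shift n y)) (j : S) :
    ∀ᵐ y ∂Q j, q y := by
  obtain ⟨n, hn⟩ := hQ.irreducible i j
  have hnull : Q i (Set.univ ∩ {y | (y n).1 = j} ∩ shift n ⁻¹' {y | q y}ᶜ) = 0 := by
    rw [measure_eq_zero_iff_ae_notMem]
    filter_upwards [h] with y hy hc using hc.2 (hy n)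
  rw [hQ.isMarkov i j n _ _ MeasurableSet.univ hq.compl fun _ _ _ => rfl, Set.univ_inter] at hnull
  exact (mul_eq_zero.1 hnull).resolve_left hn

lemma ae_all_shift_of_ae [Countable S] (hQ : IsRecurrentMarkov Q)
    {q : (ℕ → S × F) → Prop} (hq : MeasurableSet {y | q y}) (h : ∀ j, ∀ᵐ y ∂Q j, q y) (i : S) :
    ∀ᵐ y ∂Q i, ∀ n, q (shift n y) := by
  have hnull (n : ℕ) (j : S) :
      Q i (Set.univ ∩ {y | (y n).1 = j} ∩ shift n ⁻¹' {y | q y}ᶜ) = 0 := by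
    rw [hQ.isMarkov i j n _ _ MeasurableSet.univ hq.compl fun _ _ _ => rfl,
      show Q j {y | q y}ᶜ = 0 from h j, mul_zero]
  filter_upwards [ae_all_iff.2 fun n => ae_all_iff.2 fun j =>
    measure_eq_zero_iff_ae_notMem.1 (hnull n j)] with y hy n
  exact not_not.1 fun hc => hy n _ ⟨⟨trivial, rfl⟩, hc⟩

end IsRecurrentMarkov

/-- The excursion functional determined by the functionals `f n` of excursions of length `n`. -/
def cycle (f : ℕ → (ℕ → S × F) → E) (i : S) (y : ℕ → S × F) : E := f (returnTime i y) y

variable [MeasurableSingletonClass S] [MeasurableSpace E] {f : ℕ → (ℕ → S × F) → E}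

lemma measure_cycle_inter_afterReturn (hQ : IsMarkov Q) {i j : S}
    (hit : ∀ᵐ y ∂Q j, y ∈ hits i) (hf : ∀ n, Measurable (f n))
    (hfn : ∀ n, DependsOn (f n) (Set.Iio n)) {D : Set E} (hD : MeasurableSet D)
    {H : Set (ℕ → S × F)} (hH : MeasurableSet H) :
    Q j (cycle f i ⁻¹' D ∩ afterReturn i ⁻¹' H) = Q j (cycle f i ⁻¹' D) * Q i H := by
  let G (n : ℕ) : Set (ℕ → S × F) := noReturnBefore i n ∩ f n ⁻¹' D
  have hG (n : ℕ) : MeasurableSet (G n) := (measurableSet_noReturnBefore i n).inter (hf n hD)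
  have hGn (n : ℕ) : DependsOn (· ∈ G n) (Set.Iio n) := by
    intro y z hyz
    simp only [G, Set.mem_inter_iff, Set.mem_preimage, hfn n hyz,
      dependsOn_noReturnBefore i n hyz]
  have hsum {H : Set (ℕ → S × F)} (hH : MeasurableSet H) :
      Q j (cycle f i ⁻¹' D ∩ afterReturn i ⁻¹' H)
        = ∑' n, Q j (G n ∩ {y | (y n).1 = i} ∩ shift n ⁻¹' H) := by
    have hret (n : ℕ) (y : ℕ → S × F) : y ∈ G n ∩ {y | (y n).1 = i} ∩ shift n ⁻¹' H ↔
        (y ∈ hits i ∧ returnTime i y = n) ∧ f n y ∈ D ∧ shift n y ∈ H := by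
      rw [mem_hits_and_returnTime_eq_iff]
      simp only [G, Set.mem_inter_iff, Set.mem_preimage, Set.mem_ofPred_eq]
      tauto
    rw [← measure_iUnion]
    · refine measure_congr (eventuallyEq_set.2 ?_)
      filter_upwards [hit] with y hy
      simp only [Set.mem_iUnion, hret, hy, true_and, exists_eq_left', Set.mem_inter_iff,
        Set.mem_preimage, cycle, afterReturn]
    · exact fun n m hnm => Set.disjoint_left.2 fun y hn hm =>
        hnm (((hret n y).1 hn).1.2.symm.trans ((hret m y).1 hm).1.2)
    · exact fun n => ((hG n).inter (measurableSet_fst_eq n i)).inter (measurable_shift n hH)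
  have huniv : Q j (cycle f i ⁻¹' D) = ∑' n, Q j (G n ∩ {y | (y n).1 = i}) := by
    simpa only [Set.preimage_univ, Set.inter_univ] using hsum MeasurableSet.univ
  rw [hsum hH, huniv, ← ENNReal.tsum_mul_right]
  exact tsum_congr fun n => hQ j i n _ H (hG n) hH (hGn n)

namespace IsRecurrentMarkov

variable (hQ : IsRecurrentMarkov Q)
include hQ

lemma map_afterReturn {i j : S} (hit : ∀ᵐ y ∂Q j, y ∈ hits i) :
    (Q j).map (afterReturn i) = Q i := by
  have := hQ.isProbabilityMeasure j
  ext H hH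
  have h := measure_cycle_inter_afterReturn (f := fun _ _ => ()) hQ.isMarkov hit
    (fun _ => measurable_const) (fun _ _ _ _ => rfl) MeasurableSet.univ hH
  rwa [Set.preimage_univ, Set.univ_inter, measure_univ, one_mul,
    ← Measure.map_apply (measurable_afterReturn i) hH] at h

lemma measurePreserving_afterReturn (i : S) : MeasurePreserving (afterReturn i) (Q i) (Q i) :=
  ⟨measurable_afterReturn i, hQ.map_afterReturn (hQ.ae_mem_hits_self i)⟩

lemma ae_all_iterate_mem_hits (i : S) : ∀ᵐ y ∂Q i, ∀ n, (afterReturn i)^[n] y ∈ hits i :=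
  ae_all_iff.2 fun n => ((hQ.measurePreserving_afterReturn i).iterate n).quasiMeasurePreserving.ae
    (hQ.ae_mem_hits_self i)

lemma ae_mem_hits (i j : S) : ∀ᵐ y ∂Q j, y ∈ hits i :=
  hQ.ae_of_ae_all_shift (measurableSet_hits i)
    ((hQ.ae_all_iterate_mem_hits i).mono fun _ hy => shift_mem_hits hy) j

lemma ae_afterReturn (i j : S) {q : (ℕ → S × F) → Prop} (hq : ∀ᵐ y ∂Q i, q y) :
    ∀ᵐ y ∂Q j, q (afterReturn i y) := by
  rw [← hQ.map_afterReturn (hQ.ae_mem_hits i j)] at hq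
  exact ae_of_ae_map (measurable_afterReturn i).aemeasurable hq

lemma ae_all_shift_mem_hits (i j : S) : ∀ᵐ y ∂Q j, ∀ n, shift n y ∈ hits i := by
  filter_upwards [hQ.ae_mem_hits i j, hQ.ae_afterReturn i j (hQ.ae_all_iterate_mem_hits i)]
    with y hy hy'
  exact shift_mem_hits fun n => n.casesOn hy hy'

theorem map_cycles (hf : ∀ n, Measurable (f n)) (hfn : ∀ n, DependsOn (f n) (Set.Iio n)) (i : S) :
    (Q i).map (fun y n => cycle f i ((afterReturn i)^[n] y)) = iidLaw ((Q i).map (cycle f i)) := by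
  have := hQ.isProbabilityMeasure i
  have hT := hQ.measurePreserving_afterReturn i
  refine map_iterate_eq_iidLaw hT (measurable_returnTime_apply i hf) ?_
  refine indepFun_iff_measure_inter_preimage_eq_mul.2 fun D H hD hH => ?_
  rw [hT.measure_preimage hH.nullMeasurableSet]
  exact measure_cycle_inter_afterReturn hQ.isMarkov (hQ.ae_mem_hits_self i) hf hfn hD hH

end IsRecurrentMarkov

end StrongMarkov

section Perpetuity

variable {S : Type*}

/-- The product `Π_n` of the multiplicative coefficients along a path. -/
def partialProd (n : ℕ) (y : ℕ → S × ℝ × ℝ) : ℝ := ∏ k ∈ Finset.range n, (y k).2.1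

/-- The term `Π_n B_{n+1}` of the perpetuity along a path. -/
def term (n : ℕ) (y : ℕ → S × ℝ × ℝ) : ℝ := partialProd n y * (y n).2.2

/-- The largest modulus of the first `n` terms of the perpetuity. -/
def maxTerm (n : ℕ) (y : ℕ → S × ℝ × ℝ) : ℝ≥0 := (Finset.range n).sup fun k => ‖term k y‖₊

/-- The statistics `(-log |Π_n|, max_{k ≤ n} |Π_{k-1} B_k|, n)` of an excursion of length `n`. -/
def excursion (n : ℕ) (y : ℕ → S × ℝ × ℝ) : ℝ × ℝ≥0 × ℕ :=
  (-Real.log |partialProd n y|, maxTerm n y, n)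

/-- The statistics of the successive excursions of a path from `i`. -/
def cycles (i : S) (y : ℕ → S × ℝ × ℝ) (n : ℕ) : ℝ × ℝ≥0 × ℕ :=
  cycle excursion i ((afterReturn i)^[n] y)

lemma partialProd_add (m n : ℕ) (y : ℕ → S × ℝ × ℝ) :
    partialProd (m + n) y = partialProd m y * partialProd n (shift m y) :=
  Finset.prod_range_add _ _ _

lemma term_add (m n : ℕ) (y : ℕ → S × ℝ × ℝ) :
    term (m + n) y = partialProd m y * term n (shift m y) := by
  rw [term, partialProd_add, mul_assoc, term, shift_apply]

lemma abs_term_le_maxTerm {k n : ℕ} (hk : k < n) (y : ℕ → S × ℝ × ℝ) :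
    |term k y| ≤ maxTerm n y := by
  have h : ‖term k y‖₊ ≤ maxTerm n y :=
    Finset.le_sup (f := fun k => ‖term k y‖₊) (Finset.mem_range.2 hk)
  exact_mod_cast h

lemma exists_maxTerm_eq {n : ℕ} (hn : 0 < n) (y : ℕ → S × ℝ × ℝ) :
    ∃ k, (maxTerm n y : ℝ) = |term k y| := by
  obtain ⟨k, -, hk⟩ := Finset.exists_mem_eq_sup (Finset.range n) ⟨0, Finset.mem_range.2 hn⟩
    fun k => ‖term k y‖₊
  exact ⟨k, congrArg NNReal.toReal hk⟩

lemma partialProd_ne_zero {y : ℕ → S × ℝ × ℝ} (hy : ∀ k, (y k).2.1 ≠ 0) (n : ℕ) :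
    partialProd n y ≠ 0 :=
  Finset.prod_ne_zero_iff.2 fun k _ => hy k

lemma dependsOn_partialProd (n : ℕ) :
    DependsOn (partialProd n : (ℕ → S × ℝ × ℝ) → ℝ) (Set.Iio n) := fun _ _ h =>
  Finset.prod_congr rfl fun k hk => by rw [h k (Finset.mem_range.1 hk)]

lemma dependsOn_excursion (n : ℕ) :
    DependsOn (excursion n : (ℕ → S × ℝ × ℝ) → _) (Set.Iio n) := by
  intro y z h
  have hterm : ∀ k ∈ Finset.range n, ‖term k y‖₊ = ‖term k z‖₊ := by
    intro k hk
    rw [term, term, h k (Finset.mem_range.1 hk), dependsOn_partialProd k fun l hl =>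
      h l (hl.trans (Finset.mem_range.1 hk))]
  rw [excursion, excursion, dependsOn_partialProd n h, maxTerm, maxTerm,
    Finset.sup_congr rfl hterm]

section Path

variable {i : S} {y : ℕ → S × ℝ × ℝ} (hy : ∀ n, shift n y ∈ hits i)
include hy

lemma cycles_eq (n : ℕ) : cycles i y n
    = excursion (returnTime i (shift (nthReturn i n y) y)) (shift (nthReturn i n y) y) := by
  rw [cycles, iterate_afterReturn hy, cycle]

variable (hy0 : ∀ k, (y k).2.1 ≠ 0)
include hy0

lemma exp_neg_walk_cycles (n : ℕ) :
    Real.exp (-walk Prod.fst n (cycles i y)) = |partialProd (nthReturn i n y) y| := by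
  induction n with
  | zero => simp [nthReturn, partialProd]
  | succ n ih =>
    have hpos : 0 < |partialProd (returnTime i (shift (nthReturn i n y) y))
        (shift (nthReturn i n y) y)| := abs_pos.2 (partialProd_ne_zero (fun k => hy0 _) _)
    rw [walk_succ, neg_add, Real.exp_add, ih, nthReturn_succ (hy _), partialProd_add, abs_mul,
      cycles_eq hy, excursion, neg_neg, Real.exp_log hpos]

lemma exists_exp_neg_walk_cycles_mul_eq (n : ℕ) :
    ∃ k ≥ n, Real.exp (-walk Prod.fst n (cycles i y)) * (cycles i y n).2.1 = |term k y| := by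
  obtain ⟨k, hk⟩ := exists_maxTerm_eq (returnTime_spec (hy (nthReturn i n y))).1
    (shift (nthReturn i n y) y)
  refine ⟨nthReturn i n y + k, le_add_right ((strictMono_nthReturn hy).le_apply), ?_⟩
  rw [exp_neg_walk_cycles hy hy0, cycles_eq hy, excursion, hk, term_add, abs_mul]

lemma sum_abs_term_le (n : ℕ) :
    ∑ k ∈ Finset.range (nthReturn i n y), |term k y| ≤ ∑ k ∈ Finset.range n,
      Real.exp (-walk Prod.fst k (cycles i y)) * ((cycles i y k).2.2 * (cycles i y k).2.1) := by
  induction n with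
  | zero => simp [nthReturn]
  | succ n ih =>
    rw [nthReturn_succ (hy _), Finset.sum_range_add, Finset.sum_range_succ _ n,
      exp_neg_walk_cycles hy hy0, cycles_eq hy, excursion]
    generalize returnTime i (shift (nthReturn i n y) y) = r
    refine add_le_add ih ?_
    calc ∑ k ∈ Finset.range r, |term (nthReturn i n y + k) y|
        ≤ ∑ _k ∈ Finset.range r,
            |partialProd (nthReturn i n y) y| * maxTerm r (shift (nthReturn i n y) y) :=
          Finset.sum_le_sum fun k hk => by
            rw [term_add, abs_mul]
            gcongr
            exact abs_term_le_maxTerm (Finset.mem_range.1 hk) _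
      _ = _ := by rw [Finset.sum_const, Finset.card_range, nsmul_eq_mul, mul_left_comm]

lemma summable_abs_term (hs : Summable fun k =>
      Real.exp (-walk Prod.fst k (cycles i y)) * ((cycles i y k).2.2 * (cycles i y k).2.1)) :
    Summable fun k => |term k y| := by
  refine summable_of_sum_range_le (c := ∑' k,
    Real.exp (-walk Prod.fst k (cycles i y)) * ((cycles i y k).2.2 * (cycles i y k).2.1))
    (fun _ => abs_nonneg _) fun n => ?_
  calc ∑ k ∈ Finset.range n, |term k y|
      ≤ ∑ k ∈ Finset.range (nthReturn i n y), |term k y| :=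
        Finset.sum_le_sum_of_subset_of_nonneg
          (Finset.range_mono (strictMono_nthReturn hy).le_apply) fun _ _ _ => abs_nonneg _
    _ ≤ _ := sum_abs_term_le hy hy0 n
    _ ≤ _ := hs.sum_le_tsum _ fun k _ => by positivity

lemma tendsto_partialProd_nthReturn_iff :
    Tendsto (fun n => partialProd (nthReturn i n y) y) atTop (𝓝 0) ↔
      Tendsto (fun n => walk Prod.fst n (cycles i y)) atTop atTop := by
  rw [tendsto_zero_iff_abs_tendsto_zero]
  simp_rw [Function.comp_def, ← exp_neg_walk_cycles hy hy0,
    Real.tendsto_exp_comp_nhds_zero, tendsto_neg_atBot_iff]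

lemma snd_eq_zero_of_cycles_eq_zero (hw : ∀ n, (cycles i y n).2.1 = 0) (k : ℕ) :
    (y k).2.2 = 0 := by
  have hsum : ∑ k ∈ Finset.range (nthReturn i (k + 1) y), |term k y| ≤ 0 := by
    simpa only [hw, NNReal.coe_zero, mul_zero, Finset.sum_const_zero]
      using sum_abs_term_le hy hy0 (k + 1)
  have hk : k ∈ Finset.range (nthReturn i (k + 1) y) :=
    Finset.mem_range.2 ((strictMono_nthReturn hy).le_apply (x := k + 1))
  have hterm : |term k y| ≤ 0 :=
    (Finset.single_le_sum (f := fun k => |term k y|) (fun _ _ => abs_nonneg _) hk).trans hsum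
  exact (mul_eq_zero.1 (abs_nonpos_iff.1 hterm)).resolve_left (partialProd_ne_zero hy0 k)

end Path

variable [MeasurableSpace S]

@[fun_prop]
lemma measurable_partialProd (n : ℕ) :
    Measurable (partialProd n : (ℕ → S × ℝ × ℝ) → ℝ) := by
  unfold partialProd
  fun_prop

lemma measurable_term (n : ℕ) : Measurable (term n : (ℕ → S × ℝ × ℝ) → ℝ) := by
  unfold term
  fun_prop

lemma measurable_maxTerm (n : ℕ) : Measurable (maxTerm n : (ℕ → S × ℝ × ℝ) → ℝ≥0) := by
  have h : maxTerm n = (Finset.range n).sup fun k (y : ℕ → S × ℝ × ℝ) => ‖term k y‖₊ := by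
    ext1 y
    simp only [maxTerm, Finset.sup_apply]
  rw [h]
  exact Finset.sup_induction measurable_const (fun _ hf _ hg => hf.sup hg)
    fun k _ => (measurable_term k).nnnorm

lemma measurable_excursion (n : ℕ) :
    Measurable (excursion n : (ℕ → S × ℝ × ℝ) → ℝ × ℝ≥0 × ℕ) := by
  have := measurable_maxTerm (S := S) n
  unfold excursion
  fun_prop

end Perpetuity

section TendstoEval

variable {E : Type*} [MeasurableSpace E] {μ : Measure E} [IsProbabilityMeasure μ]

lemma ae_eq_zero_of_tendsto_eval {w : E → ℝ} (hw : Measurable w)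
    (h : ∀ᵐ x ∂iidLaw μ, Tendsto (fun n => w (x n)) atTop (𝓝 0)) : ∀ᵐ e ∂μ, w e = 0 := by
  have hmeas : Measurable fun e => min ‖w e‖ₑ 1 := hw.enorm.min measurable_const
  have hconst (n : ℕ) : ∫⁻ x, min ‖w (x n)‖ₑ 1 ∂iidLaw μ = ∫⁻ e, min ‖w e‖ₑ 1 ∂μ :=
    (measurePreserving_eval_infinitePi (fun _ => μ) n).lintegral_comp hmeas
  have hlim : Tendsto (fun n => ∫⁻ x, min ‖w (x n)‖ₑ 1 ∂iidLaw μ) atTop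
      (𝓝 (∫⁻ _, 0 ∂iidLaw μ)) := by
    refine tendsto_lintegral_of_dominated_convergence 1
      (fun n => hmeas.comp (measurable_pi_apply n)) (fun n => .of_forall fun x => min_le_right _ _)
      (by simp) ?_
    filter_upwards [h] with x hx
    simpa using hx.enorm.min (tendsto_const_nhds (x := (1 : ℝ≥0∞)))
  simp_rw [hconst, lintegral_zero] at hlim
  have hzero := (lintegral_eq_zero_iff hmeas).1 (tendsto_nhds_unique tendsto_const_nhds hlim)
  filter_upwards [hzero] with e he
  simpa using he

end TendstoEval

section PerpetuityLaw

variable {S : Type*} [MeasurableSpace S] {Q : S → Measure (ℕ → S × ℝ × ℝ)}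

/-- The law under `Q i` of the statistics of an excursion from `i`. -/
abbrev cycleLaw (Q : S → Measure (ℕ → S × ℝ × ℝ)) (i : S) : Measure (ℝ × ℝ≥0 × ℕ) :=
  (Q i).map (cycle excursion i)

lemma IsRecurrentMarkov.ae_all_ne_zero [Countable S] (hQ : IsRecurrentMarkov Q)
    (hA : ∀ j, ∀ᵐ y ∂Q j, (y 0).2.1 ≠ 0) (i : S) : ∀ᵐ y ∂Q i, ∀ k, (y k).2.1 ≠ 0 :=
  hQ.ae_all_shift_of_ae (q := fun y => (y 0).2.1 ≠ 0) (by measurability) hA i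

variable [MeasurableSingletonClass S]

lemma measurable_cycle_excursion (i : S) :
    Measurable (cycle excursion i : (ℕ → S × ℝ × ℝ) → ℝ × ℝ≥0 × ℕ) :=
  measurable_returnTime_apply i measurable_excursion

lemma measurable_cycles (i : S) :
    Measurable (cycles i : (ℕ → S × ℝ × ℝ) → ℕ → ℝ × ℝ≥0 × ℕ) :=
  measurable_pi_lambda _ fun n =>
    (measurable_cycle_excursion i).comp ((measurable_afterReturn i).iterate n)

namespace IsRecurrentMarkov

variable (hQ : IsRecurrentMarkov Q)
include hQ

lemma isProbabilityMeasure_cycleLaw (i : S) : IsProbabilityMeasure (cycleLaw Q i) :=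
  have := hQ.isProbabilityMeasure i
  Measure.isProbabilityMeasure_map (measurable_cycle_excursion i).aemeasurable

lemma ae_iidLaw_cycleLaw_iff {i : S} {q : (ℕ → ℝ × ℝ≥0 × ℕ) → Prop}
    (hq : MeasurableSet {x | q x}) :
    (∀ᵐ x ∂iidLaw (cycleLaw Q i), q x) ↔ ∀ᵐ y ∂Q i, q (cycles i y) := by
  rw [← hQ.map_cycles measurable_excursion dependsOn_excursion i]
  exact ae_map_iff (measurable_cycles i).aemeasurable hq

lemma ae_cycles {i : S} {q : (ℕ → ℝ × ℝ≥0 × ℕ) → Prop}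
    (h : ∀ᵐ x ∂iidLaw (cycleLaw Q i), q x) : ∀ᵐ y ∂Q i, q (cycles i y) := by
  rw [← hQ.map_cycles measurable_excursion dependsOn_excursion i] at h
  exact ae_of_ae_map (measurable_cycles i).aemeasurable h

lemma ae_tendsto_partialProd_nthReturn {i : S}
    (h : ∀ᵐ y ∂Q i, Tendsto (fun n => partialProd (nthReturn i n y) y) atTop (𝓝 0)) (j : S) :
    ∀ᵐ y ∂Q j, Tendsto (fun n => partialProd (nthReturn i n y) y) atTop (𝓝 0) := by
  filter_upwards [hQ.ae_afterReturn i j h, hQ.ae_all_shift_mem_hits i j] with y hlim hy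
  rw [← tendsto_add_atTop_iff_nat 1]
  simp_rw [nthReturn_succ' hy, partialProd_add]
  simpa only [mul_zero, afterReturn] using hlim.const_mul (partialProd (returnTime i y) y)

lemma ae_summable_abs_term_of_ae_summable {i : S}
    (h : ∀ᵐ y ∂Q i, Summable fun n => |term n y|) (j : S) :
    ∀ᵐ y ∂Q j, Summable fun n => |term n y| := by
  filter_upwards [hQ.ae_afterReturn i j h] with y hy
  rw [← summable_nat_add_iff (returnTime i y)]
  simp_rw [add_comm _ (returnTime i y), term_add, abs_mul]
  exact hy.mul_left _

section

variable [Countable S] (hA : ∀ j, ∀ᵐ y ∂Q j, (y 0).2.1 ≠ 0)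
include hA

lemma ae_tendsto_partialProd_nthReturn_iff (i : S) :
    (∀ᵐ y ∂Q i, Tendsto (fun n => partialProd (nthReturn i n y) y) atTop (𝓝 0)) ↔
      ∀ᵐ x ∂iidLaw (cycleLaw Q i), Tendsto (fun n => walk Prod.fst n x) atTop atTop := by
  rw [hQ.ae_iidLaw_cycleLaw_iff (measurableSet_tendsto _ (measurable_walk measurable_fst))]
  refine eventually_congr ?_
  filter_upwards [hQ.ae_all_ne_zero hA i, hQ.ae_all_shift_mem_hits i i] with y hy0 hy
  exact tendsto_partialProd_nthReturn_iff hy hy0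

lemma ae_fst_eq_zero_iff (i : S) :
    (∀ᵐ e ∂cycleLaw Q i, e.1 = 0) ↔ ∀ᵐ y ∂Q i, |partialProd (returnTime i y) y| = 1 := by
  rw [ae_map_iff (measurable_cycle_excursion i).aemeasurable (by measurability)]
  refine eventually_congr ?_
  filter_upwards [hQ.ae_all_ne_zero hA i] with y hy0
  have hpos := abs_pos.2 (partialProd_ne_zero hy0 (returnTime i y))
  rw [cycle, excursion, neg_eq_zero, Real.log_eq_zero]
  grind

lemma cycleLaw_pos_ne_zero (hB : ¬∀ j, ∀ᵐ y ∂Q j, (y 0).2.2 = 0) (i : S) :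
    cycleLaw Q i {e | 0 < (e.2.1 : ℝ)} ≠ 0 := by
  have := hQ.isProbabilityMeasure_cycleLaw i
  refine fun h => hB fun j => hQ.ae_of_ae_all_shift (i := i) (q := fun y => (y 0).2.2 = 0)
    (by measurability) ?_ j
  have hzero : ∀ᵐ e ∂cycleLaw Q i, e.2.1 = 0 :=
    (measure_eq_zero_iff_ae_notMem.1 h).mono fun e he => by simpa using he
  filter_upwards [hQ.ae_cycles (ae_all_eval _ hzero), hQ.ae_all_ne_zero hA i,
    hQ.ae_all_shift_mem_hits i i] with y hw hy0 hy
  exact snd_eq_zero_of_cycles_eq_zero hy hy0 hw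

theorem ae_tendsto_partialProd_and_lintegral_ne_top_of_bddAbove
    (hB : ¬∀ j, ∀ᵐ y ∂Q j, (y 0).2.2 = 0) {i : S}
    (hne : ¬∀ᵐ y ∂Q i, |partialProd (returnTime i y) y| = 1)
    (hbd : ∀ᵐ y ∂Q i, BddAbove (Set.range fun n => |term n y|)) :
    (∀ᵐ y ∂Q i, Tendsto (fun n => partialProd (nthReturn i n y) y) atTop (𝓝 0)) ∧
      ∫⁻ e, ENNReal.ofReal (truncRatio (cycleLaw Q i) Prod.fst (logplus e.2.1)) ∂cycleLaw Q i
        ≠ ⊤ := by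
  have := hQ.isProbabilityMeasure_cycleLaw i
  rw [hQ.ae_tendsto_partialProd_nthReturn_iff hA]
  refine ae_tendsto_walk_and_lintegral_ne_top_of_bddAbove measurable_fst
    (fun h => hne ((hQ.ae_fst_eq_zero_iff hA i).1 ?_)) (by fun_prop)
    (fun e => e.2.1.coe_nonneg) (hQ.cycleLaw_pos_ne_zero hA hB i) ?_
  · exact (measure_eq_zero_iff_ae_notMem.1 h).mono fun e he => not_not.1 he
  · refine (hQ.ae_iidLaw_cycleLaw_iff (measurableSet_bddAbove_range fun n => ?_)).2 ?_
    · have := measurable_walk (E := ℝ × ℝ≥0 × ℕ) measurable_fst n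
      fun_prop
    · filter_upwards [hbd, hQ.ae_all_ne_zero hA i, hQ.ae_all_shift_mem_hits i i] with y hC hy0 hy
      refine hC.mono (Set.range_subset_iff.2 fun n => ?_)
      obtain ⟨k, -, hk⟩ := exists_exp_neg_walk_cycles_mul_eq hy hy0 n
      exact ⟨k, hk.symm⟩

theorem ae_summable_abs_term {i : S}
    (hτ : ∫⁻ y, returnTime i y ∂Q i ≠ ⊤)
    (hlim : ∀ᵐ y ∂Q i, Tendsto (fun n => partialProd (nthReturn i n y) y) atTop (𝓝 0))
    (htop : ∫⁻ e, ENNReal.ofReal (truncRatio (cycleLaw Q i) Prod.fst (logplus e.2.1))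
      ∂cycleLaw Q i ≠ ⊤) (j : S) :
    ∀ᵐ y ∂Q j, Summable fun n => |term n y| := by
  have := hQ.isProbabilityMeasure_cycleLaw i
  have hlength : Integrable (fun e => (e.2.2 : ℝ)) (cycleLaw Q i) := by
    refine ⟨by fun_prop, ?_⟩
    rw [hasFiniteIntegral_def, lintegral_map (by fun_prop) (measurable_cycle_excursion i)]
    simpa [cycle, excursion] using hτ.lt_top
  refine hQ.ae_summable_abs_term_of_ae_summable (i := i) ?_ j
  filter_upwards [hQ.ae_cycles <| ae_summable_exp_neg_walk_mul measurable_fst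
      ((hQ.ae_tendsto_partialProd_nthReturn_iff hA i).1 hlim) (w := fun e => (e.2.1 : ℝ))
      (by fun_prop) (fun e => e.2.1.coe_nonneg) htop (by fun_prop)
      (fun e => e.2.2.cast_nonneg) hlength,
    hQ.ae_all_ne_zero hA i, hQ.ae_all_shift_mem_hits i i] with y hs hy0 hy
  exact summable_abs_term hy hy0 hs

theorem not_ae_abs_partialProd_eq_one_of_tendsto_term (hB : ¬∀ j, ∀ᵐ y ∂Q j, (y 0).2.2 = 0)
    {i : S} (hlim : ∀ᵐ y ∂Q i, Tendsto (fun n => term n y) atTop (𝓝 0)) :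
    ¬∀ᵐ y ∂Q i, |partialProd (returnTime i y) y| = 1 := by
  have := hQ.isProbabilityMeasure_cycleLaw i
  refine fun hone => hQ.cycleLaw_pos_ne_zero hA hB i (measure_eq_zero_iff_ae_notMem.2 ?_)
  have hξ := ae_all_eval _ ((hQ.ae_fst_eq_zero_iff hA i).2 hone)
  refine (ae_eq_zero_of_tendsto_eval (w := fun e => (e.2.1 : ℝ)) (by fun_prop) ?_).mono
    fun e he => he.not_gt
  refine (hQ.ae_iidLaw_cycleLaw_iff (measurableSet_tendsto _ (by fun_prop))).2 ?_
  filter_upwards [hlim, hQ.ae_cycles hξ, hQ.ae_all_ne_zero hA i, hQ.ae_all_shift_mem_hits i i]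
    with y hterm hy1 hy0 hy
  have hwalk (n : ℕ) : walk Prod.fst n (cycles i y) = 0 := Finset.sum_eq_zero fun k _ => hy1 k
  choose k hkn hk using exists_exp_neg_walk_cycles_mul_eq hy hy0
  simp only [hwalk, neg_zero, Real.exp_zero, one_mul] at hk
  simpa only [hk, Function.comp_def, abs_zero] using
    (hterm.comp (tendsto_atTop_mono hkn tendsto_id)).abs

end

end IsRecurrentMarkov

end PerpetuityLaw

lemma prob_lt_one_iff {α : Type*} [MeasurableSpace α] {μ : Measure α} [IsProbabilityMeasure μ]
    {s : Set α} (hs : MeasurableSet s) : μ s < 1 ↔ ¬∀ᵐ x ∂μ, x ∈ s := by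
  rw [prob_le_one.lt_iff_ne, not_iff_not]
  exact (mem_ae_iff_prob_eq_one hs).symm

namespace MMSetting

variable {S : Type*} [MeasurableSpace S] [MeasurableSingletonClass S] [Countable S]
  {Ω : Type*} [MeasurableSpace Ω] (X : MMSetting S Ω)

/-- The path of the modulated chain, marked with the coefficients of each transition. -/
def path (ω : Ω) (n : ℕ) : S × ℝ × ℝ := (X.M n ω, X.A n ω, X.B n ω)

/-- The law of the path of the modulated chain started at `i`. -/
def pathLaw (i : S) : Measure (ℕ → S × ℝ × ℝ) := (X.P i).map X.path

lemma measurable_path : Measurable X.path :=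
  measurable_pi_lambda _ fun n => (X.measM n).prodMk ((X.measA n).prodMk (X.measB n))

lemma isProbabilityMeasure_pathLaw (i : S) : IsProbabilityMeasure (X.pathLaw i) :=
  have := X.prob i
  Measure.isProbabilityMeasure_map X.measurable_path.aemeasurable

lemma ae_pathLaw_iff {i : S} {q : (ℕ → S × ℝ × ℝ) → Prop} (hq : MeasurableSet {y | q y}) :
    (∀ᵐ y ∂X.pathLaw i, q y) ↔ ∀ᵐ ω ∂X.P i, q (X.path ω) :=
  ae_map_iff X.measurable_path.aemeasurable hq

lemma ae_path {i : S} {q : (ℕ → S × ℝ × ℝ) → Prop} (h : ∀ᵐ y ∂X.pathLaw i, q y) :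
    ∀ᵐ ω ∂X.P i, q (X.path ω) :=
  ae_of_ae_map X.measurable_path.aemeasurable h

lemma ae_M_zero_eq (i : S) : ∀ᵐ ω ∂X.P i, X.M 0 ω = i :=
  have := X.prob i
  (mem_ae_iff_prob_eq_one (X.measM 0 (measurableSet_singleton i))).2 (X.start i)

lemma path_preimage_cylinder (N : ℕ) (s : ℕ → S) (C : ℕ → Set (ℝ × ℝ)) :
    X.path ⁻¹' cylinder N s C = (⋂ k ∈ Finset.range (N + 1), {ω | X.M k ω = s k}) ∩
      ⋂ k ∈ Finset.range N, {ω | (X.A k ω, X.B k ω) ∈ C k} := by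
  ext ω
  simp only [cylinder, path, Set.mem_preimage, Set.mem_ofPred_eq, Set.mem_prod,
    Set.mem_singleton_iff, Set.mem_inter_iff, Set.mem_iInter, Finset.mem_range,
    Nat.forall_lt_succ_right]
  grind

lemma hasTransitions_pathLaw : HasTransitions X.pathLaw X.p X.K where
  start i N s C hs := by
    refine measure_mono_null (t := {y | (y 0).1 = s 0})
      (fun y hy => fst_eq_of_mem_cylinder N.zero_le hy) ?_
    rw [pathLaw, Measure.map_apply X.measurable_path (measurableSet_fst_eq 0 (s 0)),
      measure_eq_zero_iff_ae_notMem]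
    filter_upwards [X.ae_M_zero_eq i] with ω hω hc using hs (hc.symm.trans hω)
  cylinder N s C hC := by
    rw [pathLaw, Measure.map_apply X.measurable_path (measurableSet_cylinder N s hC),
      path_preimage_cylinder, X.modulated _ N s C rfl hC, X.chain _ N s rfl,
      Finset.prod_mul_distrib]

lemma isRecurrentMarkov_pathLaw : IsRecurrentMarkov X.pathLaw where
  isProbabilityMeasure := X.isProbabilityMeasure_pathLaw
  isMarkov :=
    have := X.isProbabilityMeasure_pathLaw
    X.hasTransitions_pathLaw.isMarkov
  irreducible i j := by
    obtain ⟨n, hn⟩ := X.irreducible i j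
    refine ⟨n, ?_⟩
    rw [pathLaw, Measure.map_apply X.measurable_path (measurableSet_fst_eq n j)]
    exact hn.ne'
  ae_mem_hits_self i := by
    have := X.prob i
    exact (X.ae_pathLaw_iff (measurableSet_hits i)).2 <|
      (mem_ae_iff_prob_eq_one (X.measurable_path (measurableSet_hits i))).2 (X.recurrent i)

lemma lintegral_returnTime_ne_top (i : S) : ∫⁻ y, returnTime i y ∂X.pathLaw i ≠ ⊤ := by
  have := measurable_returnTime (F := ℝ × ℝ) i
  rw [pathLaw, lintegral_map (by fun_prop) X.measurable_path]
  exact (X.posRecurrent i).ne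

lemma tau_eq_nthReturn (i : S) (n : ℕ) (ω : Ω) : X.tau i n ω = nthReturn i n (X.path ω) := by
  induction n with
  | zero => rfl
  | succ n ih => simp only [tau, nthReturn, ih, path]

lemma ae_Pπ_iff {q : Ω → Prop} : (∀ᵐ ω ∂X.Pπ, q ω) ↔ ∀ j, ∀ᵐ ω ∂X.P j, q ω := by
  rw [Pπ, Measure.ae_sum_iff]
  exact forall_congr' fun j => Measure.ae_ennreal_smul_measure_iff (X.πpos j).ne'

lemma isProbabilityMeasure_Pπ : IsProbabilityMeasure X.Pπ := by
  have := X.prob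
  refine ⟨?_⟩
  simp only [Pπ, Measure.sum_apply _ MeasurableSet.univ, Measure.smul_apply, measure_univ,
    smul_eq_mul, mul_one, X.πsum]

include X in
lemma nonempty_states : Nonempty S := by
  by_contra h
  rw [not_nonempty_iff] at h
  simpa using X.πsum

lemma ae_path_fst_ne_zero (hA : X.Pπ {ω | X.A 0 ω = 0} = 0) (j : S) :
    ∀ᵐ y ∂X.pathLaw j, (y 0).2.1 ≠ 0 := by
  rw [measure_eq_zero_iff_ae_notMem, ae_Pπ_iff] at hA
  exact (X.ae_pathLaw_iff (by measurability)).2 (hA j)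

lemma not_forall_ae_path_snd_eq_zero (hB : X.Pπ {ω | X.B 0 ω = 0} < 1) :
    ¬∀ j, ∀ᵐ y ∂X.pathLaw j, (y 0).2.2 = 0 := by
  have := X.isProbabilityMeasure_Pπ
  refine fun h => (prob_lt_one_iff (X.measB 0 (measurableSet_singleton 0))).1 hB ?_
  exact X.ae_Pπ_iff.2 fun j => X.ae_path (h j)

lemma measurableSet_abs_Ai_eq_one (i : S) : MeasurableSet {ω | |X.Ai i ω| = 1} :=
  X.measurable_path <|
    (measurable_returnTime_apply i measurable_partialProd).abs (measurableSet_singleton 1)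

/-- Assertion (b) of the theorem for the state `i`. -/
def CycleCondition (i : S) : Prop :=
  (∀ᵐ ω ∂X.Pπ, Tendsto (fun n => X.Pprod (X.tau i n ω) ω) atTop (𝓝 0)) ∧
    Integrable (fun ω => X.Ji i (logplus (X.Wi i ω))) (X.P i)

lemma ae_tendsto_Pprod_tau_iff (i : S) :
    (∀ᵐ ω ∂X.Pπ, Tendsto (fun n => X.Pprod (X.tau i n ω) ω) atTop (𝓝 0)) ↔
      ∀ᵐ y ∂X.pathLaw i, Tendsto (fun n => partialProd (nthReturn i n y) y) atTop (𝓝 0) := by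
  have hmeas (n : ℕ) : Measurable fun y : ℕ → S × ℝ × ℝ => partialProd (nthReturn i n y) y :=
    (measurable_from_prod_countable_right (f := fun z : ℕ × (ℕ → S × ℝ × ℝ) =>
      partialProd z.1 z.2) measurable_partialProd).comp
      ((measurable_nthReturn i n).prodMk measurable_id)
  simp_rw [ae_Pπ_iff, tau_eq_nthReturn]
  refine ⟨fun h => (X.ae_pathLaw_iff (measurableSet_tendsto _ hmeas)).2 (h i), fun h j => ?_⟩
  exact X.ae_path (X.isRecurrentMarkov_pathLaw.ae_tendsto_partialProd_nthReturn h j)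

lemma cycleLaw_pathLaw (i : S) :
    cycleLaw X.pathLaw i = (X.P i).map fun ω => cycle excursion i (X.path ω) :=
  Measure.map_map (measurable_cycle_excursion i) X.measurable_path

lemma measurable_cycle_excursion_path (i : S) :
    Measurable fun ω => cycle excursion i (X.path ω) :=
  (measurable_cycle_excursion i).comp X.measurable_path

lemma measure_Stau_nonpos_lt_one {i : S} (h : cycleLaw X.pathLaw i {e | 0 < e.1} ≠ 0) :
    X.P i {ω | X.Stau i ω ≤ 0} < 1 := by
  have := X.prob i
  have hS : Measurable (X.Stau i) := measurable_fst.comp (X.measurable_cycle_excursion_path i)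
  refine (prob_lt_one_iff (hS measurableSet_Iic)).2 fun hnonpos => h ?_
  rw [cycleLaw_pathLaw, Measure.map_apply (X.measurable_cycle_excursion_path i) (by measurability),
    measure_eq_zero_iff_ae_notMem]
  exact hnonpos.mono fun ω hω (hpos : 0 < X.Stau i ω) => hpos.not_ge hω

lemma Ji_eq {i : S} (h : cycleLaw X.pathLaw i {e | 0 < e.1} ≠ 0) (x : ℝ) :
    X.Ji i x = truncRatio (cycleLaw X.pathLaw i) Prod.fst x + Set.indicator {0} 1 x := by
  rcases eq_or_ne x 0 with rfl | hx
  · simp [Ji, truncRatio]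
  · rw [Ji, if_neg hx, if_pos (X.measure_Stau_nonpos_lt_one h), truncRatio, truncMean,
      cycleLaw_pathLaw, integral_map (X.measurable_cycle_excursion_path i).aemeasurable
        (by fun_prop), Set.indicator_of_notMem (Set.notMem_singleton_iff.2 hx), add_zero]
    rfl

lemma integrable_Ji_iff {i : S} (h : cycleLaw X.pathLaw i {e | 0 < e.1} ≠ 0) :
    Integrable (fun ω => X.Ji i (logplus (X.Wi i ω))) (X.P i) ↔
      ∫⁻ e, ENNReal.ofReal (truncRatio (cycleLaw X.pathLaw i) Prod.fst (logplus e.2.1))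
        ∂cycleLaw X.pathLaw i ≠ ⊤ := by
  have := X.isRecurrentMarkov_pathLaw.isProbabilityMeasure_cycleLaw i
  have hlog : Measurable fun e : ℝ × ℝ≥0 × ℕ => logplus e.2.1 :=
    measurable_logplus.comp (by fun_prop)
  have hratio : Measurable fun e : ℝ × ℝ≥0 × ℕ =>
      truncRatio (cycleLaw X.pathLaw i) Prod.fst (logplus e.2.1) :=
    (measurable_truncRatio measurable_fst).comp hlog
  have hzero : Integrable (fun e : ℝ × ℝ≥0 × ℕ => Set.indicator {0} (1 : ℝ → ℝ) (logplus e.2.1))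
      (cycleLaw X.pathLaw i) :=
    (integrable_const (1 : ℝ)).indicator (hlog (measurableSet_singleton 0))
  have hW (ω : Ω) : X.Wi i ω = (cycle excursion i (X.path ω)).2.1 := rfl
  simp_rw [X.Ji_eq h, hW]
  rw [lintegral_ofReal_ne_top_iff_integrable hratio.aestronglyMeasurable
      (.of_forall fun e => truncRatio_nonneg (logplus_nonneg _)),
    ← integrable_add_iff_integrable_left hzero]
  have hmap := integrable_map_measure (μ := X.P i)
    (hratio.aestronglyMeasurable.add (X.cycleLaw_pathLaw i ▸ hzero.aestronglyMeasurable))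
    (X.measurable_cycle_excursion_path i).aemeasurable
  rw [← cycleLaw_pathLaw] at hmap
  exact hmap.symm

lemma cycleCondition_iff (hA : X.Pπ {ω | X.A 0 ω = 0} = 0) (i : S) :
    X.CycleCondition i ↔
      (∀ᵐ y ∂X.pathLaw i, Tendsto (fun n => partialProd (nthReturn i n y) y) atTop (𝓝 0)) ∧
        ∫⁻ e, ENNReal.ofReal (truncRatio (cycleLaw X.pathLaw i) Prod.fst (logplus e.2.1))
          ∂cycleLaw X.pathLaw i ≠ ⊤ := by
  have := X.isRecurrentMarkov_pathLaw.isProbabilityMeasure_cycleLaw i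
  rw [CycleCondition, ae_tendsto_Pprod_tau_iff]
  refine and_congr_right fun h => X.integrable_Ji_iff (measure_pos_ne_zero_of_tendsto_walk ?_)
  exact (X.isRecurrentMarkov_pathLaw.ae_tendsto_partialProd_nthReturn_iff
    (X.ae_path_fst_ne_zero hA) i).1 h

theorem cycleCondition_of_ae_bounded (hA : X.Pπ {ω | X.A 0 ω = 0} = 0)
    (hB : X.Pπ {ω | X.B 0 ω = 0} < 1) {i : S} (hi : X.P i {ω | |X.Ai i ω| = 1} < 1)
    (hbd : ∀ᵐ ω ∂X.Pπ, ∃ C : ℝ, ∀ n, |X.Pprod n ω * X.B n ω| ≤ C) : X.CycleCondition i := by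
  have := X.prob i
  refine (X.cycleCondition_iff hA i).2 <|
    X.isRecurrentMarkov_pathLaw.ae_tendsto_partialProd_and_lintegral_ne_top_of_bddAbove
      (X.ae_path_fst_ne_zero hA) (X.not_forall_ae_path_snd_eq_zero hB)
      (fun h => (prob_lt_one_iff (X.measurableSet_abs_Ai_eq_one i)).1 hi (X.ae_path h)) ?_
  refine (X.ae_pathLaw_iff
    (measurableSet_bddAbove_range fun n => (measurable_term n).abs)).2 ?_
  filter_upwards [X.ae_Pπ_iff.1 hbd i] with ω ⟨C, hC⟩ using ⟨C, Set.forall_mem_range.2 hC⟩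

theorem ae_summable_of_cycleCondition (hA : X.Pπ {ω | X.A 0 ω = 0} = 0) {i : S}
    (h : X.CycleCondition i) : ∀ᵐ ω ∂X.Pπ, Summable fun n => |X.Pprod n ω * X.B n ω| := by
  obtain ⟨hlim, htop⟩ := (X.cycleCondition_iff hA i).1 h
  exact X.ae_Pπ_iff.2 fun j => X.ae_path <| X.isRecurrentMarkov_pathLaw.ae_summable_abs_term
    (X.ae_path_fst_ne_zero hA) (X.lintegral_returnTime_ne_top i) hlim htop j

theorem measure_abs_Ai_eq_one_lt_one (hA : X.Pπ {ω | X.A 0 ω = 0} = 0)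
    (hB : X.Pπ {ω | X.B 0 ω = 0} < 1)
    (h : ∀ᵐ ω ∂X.Pπ, Tendsto (fun n => X.Pprod n ω * X.B n ω) atTop (𝓝 0)) (i : S) :
    X.P i {ω | |X.Ai i ω| = 1} < 1 := by
  have := X.prob i
  rw [prob_lt_one_iff (X.measurableSet_abs_Ai_eq_one i)]
  refine fun hone => X.isRecurrentMarkov_pathLaw.not_ae_abs_partialProd_eq_one_of_tendsto_term
    (X.ae_path_fst_ne_zero hA) (X.not_forall_ae_path_snd_eq_zero hB) (i := i) ?_ ?_
  · exact (X.ae_pathLaw_iff (measurableSet_tendsto _ measurable_term)).2 (X.ae_Pπ_iff.1 h i)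
  · exact (X.ae_pathLaw_iff ((measurable_returnTime_apply i measurable_partialProd).abs
      (measurableSet_singleton 1))).2 hone

lemma ae_bounded_of_ae_tendsto
    (h : ∀ᵐ ω ∂X.Pπ, Tendsto (fun n => X.Pprod n ω * X.B n ω) atTop (𝓝 0)) :
    ∀ᵐ ω ∂X.Pπ, ∃ C : ℝ, ∀ n, |X.Pprod n ω * X.B n ω| ≤ C := by
  filter_upwards [h] with ω hω
  obtain ⟨C, hC⟩ := hω.abs.bddAbove_range
  exact ⟨C, Set.forall_mem_range.1 hC⟩

theorem cycleCondition_of_ae_tendsto (hA : X.Pπ {ω | X.A 0 ω = 0} = 0)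
    (hB : X.Pπ {ω | X.B 0 ω = 0} < 1)
    (h : ∀ᵐ ω ∂X.Pπ, Tendsto (fun n => X.Pprod n ω * X.B n ω) atTop (𝓝 0)) (i : S) :
    X.CycleCondition i :=
  X.cycleCondition_of_ae_bounded hA hB (X.measure_abs_Ai_eq_one_lt_one hA hB h i)
    (X.ae_bounded_of_ae_tendsto h)

lemma forall_cycleCondition (hA : X.Pπ {ω | X.A 0 ω = 0} = 0)
    (hB : X.Pπ {ω | X.B 0 ω = 0} < 1) {i : S} (h : X.CycleCondition i) (j : S) :
    X.CycleCondition j :=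
  X.cycleCondition_of_ae_tendsto hA hB ((X.ae_summable_of_cycleCondition hA h).mono
    fun _ hω => hω.of_abs.tendsto_atTop_zero) j

lemma tendsto_Ssum_Zinf {ω : Ω} (h : Summable fun n => |X.Pprod n ω * X.B n ω|) :
    Tendsto (fun n => X.Ssum n ω) atTop (𝓝 (X.Zinf ω)) :=
  h.of_abs.hasSum.tendsto_sum_nat

lemma tendsto_term_of_tendsto_Ssum {ω : Ω} {z : ℝ}
    (h : Tendsto (fun n => X.Ssum n ω) atTop (𝓝 z)) :
    Tendsto (fun n => X.Pprod n ω * X.B n ω) atTop (𝓝 0) := by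
  have hsub := ((tendsto_add_atTop_iff_nat 1).2 h).sub h
  simpa only [Ssum, Finset.sum_range_succ_sub_sum, sub_self] using hsub

lemma ae_tendsto_tau (i : S) : ∀ᵐ ω ∂X.Pπ, Tendsto (fun n => X.tau i n ω) atTop atTop := by
  refine X.ae_Pπ_iff.2 fun j => ?_
  filter_upwards [X.ae_path (X.isRecurrentMarkov_pathLaw.ae_all_shift_mem_hits i j)] with ω hω
  simpa only [tau_eq_nthReturn] using (strictMono_nthReturn hω).tendsto_atTop

lemma cycleCondition_of_ae_tendsto_Pprod
    (h : ∀ᵐ ω ∂X.Pπ, Tendsto (fun n => X.Pprod n ω) atTop (𝓝 0)) {i : S}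
    (hi : Integrable (fun ω => X.Ji i (logplus (X.Wi i ω))) (X.P i)) : X.CycleCondition i := by
  refine ⟨?_, hi⟩
  filter_upwards [h, X.ae_tendsto_tau i] with ω hlim hτ using hlim.comp hτ

lemma admissible_const (c : ℝ) : X.Admissible fun _ => c :=
  have := X.prob
  ⟨measurable_const, fun _ => indepFun_const_left c _⟩

theorem tendsto_Pprod_and_cycleCondition_of_tendsto_Zb (hA : X.Pπ {ω | X.A 0 ω = 0} = 0)
    (hB : X.Pπ {ω | X.B 0 ω = 0} < 1)
    (h : ∀ Z : Ω → ℝ, X.Admissible Z → ∃ L : Ω → ℝ,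
      ∀ᵐ ω ∂X.Pπ, Tendsto (fun n => X.Zb Z n ω) atTop (𝓝 (L ω))) :
    (∀ᵐ ω ∂X.Pπ, Tendsto (fun n => X.Pprod n ω) atTop (𝓝 0)) ∧ ∀ i, X.CycleCondition i := by
  -- The initial values `0` and `1` isolate `Π_n`, whose limit is the one along the return times.
  obtain ⟨L₀, h₀⟩ := h _ (X.admissible_const 0)
  obtain ⟨L₁, h₁⟩ := h _ (X.admissible_const 1)
  simp only [Zb, mul_zero, zero_add, mul_one] at h₀ h₁
  have hcycle := X.cycleCondition_of_ae_tendsto hA hB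
    (h₀.mono fun _ hω => X.tendsto_term_of_tendsto_Ssum hω)
  obtain ⟨i⟩ := X.nonempty_states
  refine ⟨?_, hcycle⟩
  filter_upwards [h₀, h₁, (hcycle i).1, X.ae_tendsto_tau i] with ω hω₀ hω₁ hreturn hτ
  have hlim := hω₁.sub hω₀
  simp only [add_sub_cancel_right] at hlim
  rwa [tendsto_nhds_unique (hlim.comp hτ) hreturn] at hlim

theorem ae_tendsto_Zb_Zinf (hA : X.Pπ {ω | X.A 0 ω = 0} = 0)
    (h : ∀ᵐ ω ∂X.Pπ, Tendsto (fun n => X.Pprod n ω) atTop (𝓝 0)) {i : S}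
    (hi : Integrable (fun ω => X.Ji i (logplus (X.Wi i ω))) (X.P i)) (Z : Ω → ℝ) :
    ∀ᵐ ω ∂X.Pπ, Tendsto (fun n => X.Zb Z n ω) atTop (𝓝 (X.Zinf ω)) := by
  filter_upwards [h, X.ae_summable_of_cycleCondition hA (X.cycleCondition_of_ae_tendsto_Pprod h hi)]
    with ω hlim hsum
  simpa only [Zb, zero_mul, zero_add] using
    (hlim.mul_const (Z ω)).add (X.tendsto_Ssum_Zinf hsum)

end MMSetting

/-- **Theorem 3.1** (a.s. convergence of backward iterations in Markovian environment).
Under the standing assumptions `P_π(A_1 = 0) = 0`, `P_π(B_1 = 0) < 1`, the assertions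
(a) `Ψ_1 ∘ ⋯ ∘ Ψ_n(0) → Z_∞` a.s. (with `Z_∞` proper), (b) `Π_{τ_n(i)} → 0` a.s. and
`E_i J_i(log⁺ W^i) < ∞` for some/all `i`, (c) `P_i(|Π_{τ(i)}| = 1) < 1` for some/all `i`
and `limsup |Π_{n-1} B_n| < ∞` a.s., (d) `Π_{n-1} B_n → 0` a.s., and
(e) `∑ |Π_{n-1} B_n| < ∞` a.s. are all equivalent. Moreover, `Ψ_1 ∘ ⋯ ∘ Ψ_n(Z_0)` converges
a.s. to a proper random variable for every admissible `Z_0` iff `Π_n → 0` a.s. and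
`E_i J_i(log⁺ W^i) < ∞` for some/all `i`, in which case the limit always equals `Z_∞`. -/
theorem as_convergence_backward
    {S : Type*} [MeasurableSpace S] [MeasurableSingletonClass S] [Countable S]
    {Ω : Type*} [MeasurableSpace Ω] (X : MMSetting S Ω)
    (hA : X.Pπ {ω | X.A 0 ω = 0} = 0) (hB : X.Pπ {ω | X.B 0 ω = 0} < 1) :
    [(∀ᵐ ω ∂ X.Pπ, Tendsto (fun n => X.Ssum n ω) atTop (nhds (X.Zinf ω))),
      (∃ i : S, (∀ᵐ ω ∂ X.Pπ, Tendsto (fun n => X.Pprod (X.tau i n ω) ω) atTop (nhds 0)) ∧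
        Integrable (fun ω => X.Ji i (logplus (X.Wi i ω))) (X.P i)),
      (∀ i : S, (∀ᵐ ω ∂ X.Pπ, Tendsto (fun n => X.Pprod (X.tau i n ω) ω) atTop (nhds 0)) ∧
        Integrable (fun ω => X.Ji i (logplus (X.Wi i ω))) (X.P i)),
      ((∃ i : S, X.P i {ω | |X.Ai i ω| = 1} < 1) ∧
        ∀ᵐ ω ∂ X.Pπ, ∃ C : ℝ, ∀ n, |X.Pprod n ω * X.B n ω| ≤ C),
      ((∀ i : S, X.P i {ω | |X.Ai i ω| = 1} < 1) ∧
        ∀ᵐ ω ∂ X.Pπ, ∃ C : ℝ, ∀ n, |X.Pprod n ω * X.B n ω| ≤ C),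
      (∀ᵐ ω ∂ X.Pπ, Tendsto (fun n => X.Pprod n ω * X.B n ω) atTop (nhds 0)),
      (∀ᵐ ω ∂ X.Pπ, Summable fun n => |X.Pprod n ω * X.B n ω|)].TFAE
    ∧ ((∀ Z : Ω → ℝ, X.Admissible Z → ∃ L : Ω → ℝ,
          ∀ᵐ ω ∂ X.Pπ, Tendsto (fun n => X.Zb Z n ω) atTop (nhds (L ω))) ↔
        ((∀ᵐ ω ∂ X.Pπ, Tendsto (fun n => X.Pprod n ω) atTop (nhds 0)) ∧
          ∀ i : S, Integrable (fun ω => X.Ji i (logplus (X.Wi i ω))) (X.P i)))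
    ∧ (((∀ᵐ ω ∂ X.Pπ, Tendsto (fun n => X.Pprod n ω) atTop (nhds 0)) ∧
          ∃ i : S, Integrable (fun ω => X.Ji i (logplus (X.Wi i ω))) (X.P i)) ↔
        ((∀ᵐ ω ∂ X.Pπ, Tendsto (fun n => X.Pprod n ω) atTop (nhds 0)) ∧
          ∀ i : S, Integrable (fun ω => X.Ji i (logplus (X.Wi i ω))) (X.P i)))
    ∧ (((∀ᵐ ω ∂ X.Pπ, Tendsto (fun n => X.Pprod n ω) atTop (nhds 0)) ∧
          ∀ i : S, Integrable (fun ω => X.Ji i (logplus (X.Wi i ω))) (X.P i)) →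
        ∀ Z : Ω → ℝ, X.Admissible Z →
          ∀ᵐ ω ∂ X.Pπ, Tendsto (fun n => X.Zb Z n ω) atTop (nhds (X.Zinf ω))) := by
  obtain ⟨i₀⟩ := X.nonempty_states
  refine ⟨?_, ⟨fun h => ?_, fun h Z _ => ⟨_, X.ae_tendsto_Zb_Zinf hA h.1 (h.2 i₀) Z⟩⟩, ⟨?_, ?_⟩,
    fun h Z _ => X.ae_tendsto_Zb_Zinf hA h.1 (h.2 i₀) Z⟩
  · tfae_have 1 → 6 := fun h => h.mono fun _ => X.tendsto_term_of_tendsto_Ssum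
    tfae_have 6 → 5 := fun h =>
      ⟨X.measure_abs_Ai_eq_one_lt_one hA hB h, X.ae_bounded_of_ae_tendsto h⟩
    tfae_have 5 → 4 := fun h => ⟨⟨i₀, h.1 i₀⟩, h.2⟩
    tfae_have 4 → 3 := fun ⟨⟨_, hi⟩, hbd⟩ =>
      X.forall_cycleCondition hA hB (X.cycleCondition_of_ae_bounded hA hB hi hbd)
    tfae_have 3 → 2 := fun h => ⟨i₀, h i₀⟩
    tfae_have 2 → 7 := fun ⟨_, hi⟩ => X.ae_summable_of_cycleCondition hA hi
    tfae_have 7 → 1 := fun h => h.mono fun _ => X.tendsto_Ssum_Zinf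
    tfae_finish
  · exact (X.tendsto_Pprod_and_cycleCondition_of_tendsto_Zb hA hB h).imp_right
      fun hi i => (hi i).2
  · exact fun ⟨hlim, _, hi⟩ => ⟨hlim, fun j => (X.forall_cycleCondition hA hB
      (X.cycleCondition_of_ae_tendsto_Pprod hlim hi) j).2⟩
  · exact fun ⟨hlim, hi⟩ => ⟨hlim, i₀, hi i₀⟩

end Perpetuities
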